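/- For all integers n ≥ 1 one has 4 D_n^2 q_n ∈ ℤ, 4 D_n^7 p_n ∈ ℤ, and 4 D_n^5 p̃_n ∈ ℤ, where D_n denotes the least common multiple of the numbers 1, 2, …, n. -/

import Mathlib

noncomputable section

open Filter


/-- `a₀(n)` from recursion (1). -/
def a0 (x : ℚ) : ℚ := 41218*x^3 - 48459*x^2 + 20010*x - 2871

/-- `a₁(n)` from recursion (1). -/
def a1 (x : ℚ) : ℚ := 2*(48802112*x^9 + 89030880*x^8 + 36002654*x^7 - 24317344*x^6
  - 19538418*x^5 + 1311365*x^4 + 3790503*x^3 + 460056*x^2 - 271701*x - 60291)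

/-- `a₂(n)` from recursion (1). -/
def a2 (x : ℚ) : ℚ := 3874492*x^8 - 2617900*x^7 - 3144314*x^6 + 2947148*x^5
  + 647130*x^4 - 1182926*x^3 + 115771*x^2 + 170716*x - 44541

/-- The third-order difference equation (1), imposed for all integers `n ≥ 2`. -/
def Rec1 (y : ℕ → ℚ) : Prop := ∀ n : ℕ, 2 ≤ n →
  ((n : ℚ) + 1)^6 * a0 (n : ℚ) * y (n+1) + a1 (n : ℚ) * y n
    - 4*(2*(n : ℚ) - 1) * a2 (n : ℚ) * y (n-1)
    - 4*((n : ℚ) - 1)^4*(2*(n : ℚ) - 1)*(2*(n : ℚ) - 3) * a0 ((n : ℚ) + 1) * y (n-2) = 0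

/-- `Dlcm n` is the least common multiple of `1, 2, …, n`. -/
def Dlcm (n : ℕ) : ℕ := (Finset.Icc 1 n).lcm id

/-!
Let `R_n(s, t) = (2n)! / n! * ∏_{j=1}^n (s - j) (t - j) (s + t - j) / ∏_{j=0}^n (s + j)² (t + j)²`.
Creative telescoping shows that the operator of the recursion maps `R_n` to
`(G_n(s + 1, t) - G_n(s, t)) + (G_n(t + 1, s) - G_n(t, s))` for an explicit rational function `G_n`.
At the double pole `(-k, -l)` apply to the local expansion a linear functional `μ_{k,l}`, and sum
over all poles. By partial summation the first difference contributes
`μ_{k+1,l} - μ_{k,l}` applied to expansions of `G_n`. If these differences are combinations of the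
values of the partial fraction expansion of `G_n` at `s = 1` and at `s = 1 - t`, where `G_n`
vanishes, then the sum solves the recursion. Three such systems of functionals, built from
harmonic numbers, yield the three solutions.

Integrality is checked one prime `p` at a time. The expansions have binomial coefficients as values,
so that `D_n` clears one order of the pole. The only denominators not controlled by `D_n` are those
of harmonic numbers of index `k + l ≤ 2n`, where a power of `p` between `n` and `2n` can occur; that
excess is compensated by the factor `2n choose n`, and for `p > n` also by the zeros of
`∏ (s - j) (t - j)` modulo `p`.
-/

namespace ZetaFive

section Certificate

/-- The leading coefficient `a₀` of the recursion, at integers. -/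
def recCoeff₀ (n : ℤ) : ℤ := 41218 * n^3 - 48459 * n^2 + 20010 * n - 2871

/-- The coefficient `a₁` of the recursion, at integers. -/
def recCoeff₁ (n : ℤ) : ℤ :=
  2 * (48802112 * n^9 + 89030880 * n^8 + 36002654 * n^7 - 24317344 * n^6 - 19538418 * n^5
    + 1311365 * n^4 + 3790503 * n^3 + 460056 * n^2 - 271701 * n - 60291)

/-- The coefficient `a₂` of the recursion, at integers. -/
def recCoeff₂ (n : ℤ) : ℤ :=
  3874492 * n^8 - 2617900 * n^7 - 3144314 * n^6 + 2947148 * n^5 + 647130 * n^4 - 1182926 * n^3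
    + 115771 * n^2 + 170716 * n - 44541

theorem cast_recCoeff₀ (n : ℤ) : (recCoeff₀ n : ℚ) = a0 n := by
  push_cast [recCoeff₀]; rfl

theorem cast_recCoeff₁ (n : ℤ) : (recCoeff₁ n : ℚ) = a1 n := by
  push_cast [recCoeff₁]; rfl

theorem cast_recCoeff₂ (n : ℤ) : (recCoeff₂ n : ℚ) = a2 n := by
  push_cast [recCoeff₂]; rfl

set_option maxHeartbeats 2000000 in
-- The large integer literals are slow to elaborate.
/-- The coefficient of `s ^ i * t ^ j` in the telescoping certificate, as a polynomial in `n`. -/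
def certCoeff (n : ℤ) : ℕ → ℕ → ℤ
  | 0, 0 =>
    -105147118 * n^18 - 277391013 * n^17 - 131655664 * n^16 + 256167322 * n^15 + 317471182 * n^14
      + 57962036 * n^13 - 88984102 * n^12 - 45649606 * n^11 + 7747696 * n^10 + 9648513 * n^9
      + 682846 * n^8 - 737252 * n^7 - 114840 * n^6
  | 0, 1 =>
    252789994 * n^17 + 1120700153 * n^16 + 1267086185 * n^15 - 306835665 * n^14
      - 1262295103 * n^13 - 429704463 * n^12 + 308375567 * n^11 + 184992965 * n^10
      - 23482423 * n^9 - 30977334 * n^8 - 2832844 * n^7 + 1925080 * n^6 + 459360 * n^5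
  | 0, 2 =>
    259384874 * n^16 - 38972733 * n^15 - 1884487248 * n^14 - 2350422191 * n^13 - 198333880 * n^12
      + 982935651 * n^11 + 301893260 * n^10 - 178070637 * n^9 - 75026770 * n^8 + 12826110 * n^7
      + 7306900 * n^6 - 4552 * n^5 - 229680 * n^4
  | 0, 3 =>
    -464403206 * n^15 - 1582922147 * n^14 - 1285956719 * n^13 + 613388846 * n^12
      + 1084743670 * n^11 + 60637041 * n^10 - 322870415 * n^9 - 59654624 * n^8 + 47219510 * n^7
      + 11188452 * n^6 - 2804456 * n^5 - 734976 * n^4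
  | 0, 4 =>
    -347385304 * n^14 - 313232292 * n^13 + 370317832 * n^12 + 515741956 * n^11 + 7122416 * n^10
      - 194398876 * n^9 - 35914296 * n^8 + 35626268 * n^7 + 8073736 * n^6 - 2790272 * n^5
      - 505296 * n^4
  | 0, 5 =>
    10551808 * n^13 - 22957312 * n^12 + 916096 * n^11 + 24856896 * n^10 - 8313408 * n^9
      - 9956928 * n^8 + 4093760 * n^7 + 1442560 * n^6 - 633472 * n^5
  | 1, 1 =>
    -316677894 * n^16 - 816045661 * n^15 - 360459582 * n^14 + 761531435 * n^13 + 905662482 * n^12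
      + 159484937 * n^11 - 251037462 * n^10 - 130932971 * n^9 + 20618388 * n^8 + 28161328 * n^7
      + 2238588 * n^6 - 2199068 * n^5 - 344520 * n^4
  | 1, 2 =>
    -173816306 * n^15 + 577539375 * n^14 + 2060044993 * n^13 + 1578280838 * n^12
      - 190223688 * n^11 - 682271709 * n^10 - 168684131 * n^9 + 110391828 * n^8 + 58145292 * n^7
      - 5017692 * n^6 - 6991104 * n^5 - 217904 * n^4 + 229680 * n^3
  | 1, 3 =>
    427595532 * n^14 + 1331404898 * n^13 + 404085542 * n^12 - 1345425326 * n^11 - 990029606 * n^10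
      + 174034059 * n^9 + 321141046 * n^8 + 36132450 * n^7 - 43144208 * n^6 - 13361061 * n^5
      + 1426006 * n^4 + 1155492 * n^3 + 114840 * n^2
  | 1, 4 =>
    9397704 * n^13 - 1246022368 * n^12 - 2422149698 * n^11 - 1108436130 * n^10 + 544706522 * n^9
      + 509077364 * n^8 + 2501338 * n^7 - 81938550 * n^6 - 18126314 * n^5 + 3206332 * n^4
      + 2035368 * n^3 + 229680 * n^2
  | 1, 5 =>
    -727126738 * n^12 - 1373833259 * n^11 - 590839866 * n^10 + 327331623 * n^9 + 277689730 * n^8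
      - 5342495 * n^7 - 45270212 * n^6 - 9313257 * n^5 + 1861006 * n^4 + 1109556 * n^3
      + 114840 * n^2
  | 2, 2 =>
    45793198 * n^14 + 103408721 * n^13 - 1111646 * n^12 - 145341582 * n^11 - 71285242 * n^10
      + 50412964 * n^9 + 32325988 * n^8 - 9328746 * n^7 - 6175088 * n^6 + 881891 * n^5
      + 452790 * n^4 - 33248 * n^3
  | 2, 3 =>
    216806680 * n^13 + 228469146 * n^12 - 342100279 * n^11 - 855309456 * n^10 - 599569807 * n^9
      + 11678517 * n^8 + 207951040 * n^7 + 66515185 * n^6 - 22116022 * n^5 - 16019676 * n^4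
      - 1550492 * n^3 + 1179956 * n^2 + 344520 * n
  | 2, 4 =>
    -304065186 * n^12 - 1024681151 * n^11 - 1662445452 * n^10 - 1169688915 * n^9 + 36775132 * n^8
      + 444133879 * n^7 + 133535124 * n^6 - 52884821 * n^5 - 33156774 * n^4 - 2328076 * n^3
      + 2474752 * n^2 + 689040 * n
  | 2, 5 =>
    -385264646 * n^11 - 912812157 * n^10 - 667482732 * n^9 + 28819578 * n^8 + 241128170 * n^7
      + 68950407 * n^6 - 28494644 * n^5 - 17420780 * n^4 - 1040512 * n^3 + 1294796 * n^2
      + 344520 * n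
  | 3, 3 =>
    241702352 * n^12 + 498772334 * n^11 + 241009907 * n^10 - 430454044 * n^9 - 629478806 * n^8
      - 148958573 * n^7 + 169921565 * n^6 + 86148224 * n^5 - 12128184 * n^4 - 15270569 * n^3
      - 2341050 * n^2 + 950276 * n + 344520
  | 3, 4 =>
    178927338 * n^11 + 626364881 * n^10 - 1654473 * n^9 - 988457781 * n^8 - 518442185 * n^7
      + 233530306 * n^6 + 191197222 * n^5 - 8277742 * n^4 - 28702830 * n^3 - 5517536 * n^2
      + 1556032 * n + 689040
  | 3, 5 =>
    317790780 * n^10 + 214850496 * n^9 - 374980401 * n^8 - 313800056 * n^7 + 71965615 * n^6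
      + 98579053 * n^5 + 2478460 * n^4 - 13241425 * n^3 - 3061646 * n^2 + 605756 * n + 344520
  | 4, 0 =>
    99871214 * n^14 + 283593765 * n^13 + 147952176 * n^12 - 275256570 * n^11 - 336763534 * n^10
      - 35940372 * n^9 + 100187430 * n^8 + 33746278 * n^7 - 11083824 * n^6 - 6563617 * n^5
      - 278302 * n^4 + 420516 * n^3 + 114840 * n^2
  | 4, 1 =>
    431717332 * n^13 + 859023224 * n^12 - 238071147 * n^11 - 1620039266 * n^10 - 1060800075 * n^9
      + 176884182 * n^8 + 374339935 * n^7 + 62111902 * n^6 - 47516893 * n^5 - 19720094 * n^4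
      - 114408 * n^3 + 1639316 * n^2 + 344520 * n
  | 4, 2 =>
    596506896 * n^12 + 314848706 * n^11 - 2223546365 * n^10 - 3191647962 * n^9 - 951176812 * n^8
      + 742903159 * n^7 + 499592997 * n^6 - 8063236 * n^5 - 80329930 * n^4 - 21153567 * n^3
      + 2378774 * n^2 + 2328356 * n + 344520
  | 4, 3 =>
    -47730444 * n^11 - 1385236720 * n^10 - 2846785605 * n^9 - 1664713293 * n^8 + 369060281 * n^7
      + 661403681 * n^6 + 107580104 * n^5 - 88195288 * n^4 - 37826208 * n^3 - 421636 * n^2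
      + 3278632 * n + 689040
  | 4, 4 =>
    -301674542 * n^10 - 846091355 * n^9 - 698564401 * n^8 + 3442266 * n^7 + 247473529 * n^6
      + 71608572 * n^5 - 28789552 * n^4 - 17256307 * n^3 - 1161094 * n^2 + 1294796 * n + 344520
  | 4, 5 =>
    41218 * n^9 - 48459 * n^8 - 55185 * n^7 + 54027 * n^6 + 35349 * n^5 - 17052 * n^4 - 9898 * n^3
  | _, _ => 0

variable {R : Type*} [CommRing R]

/-- The polynomial certificate of the creative telescoping. It comes from solving a linear system
for the coefficients of a polynomial of bidegree `(4, 5)` in `(s, t)`. -/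
def cert (n : ℤ) (s t : R) : R :=
  ∑ i ∈ Finset.range 5, ∑ j ∈ Finset.range 6, (certCoeff n i j : R) * s^i * t^j

theorem map_cert {S F : Type*} [CommRing S] [FunLike F R S] [RingHomClass F R S] (f : F) (n : ℤ)
    (s t : R) : f (cert n s t) = cert n (f s) (f t) := by
  simp only [cert, map_sum, map_mul, map_pow, map_intCast]

/-- The operator of the recursion applied to the summand `R_n(s, t)`, divided by the common factor
of `R_{n-2}, …, R_{n+1}`: the ratio of `R_n` and `R_{n-1}` is, up to a function of `n`, that of
`(s - n) (t - n) (s + t - n)` and `(s + n)² (t + n)²`. -/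
def recNumerator (n : ℤ) (s t : R) : R :=
  let u (m : ℤ) : R := (s - m) * (t - m) * (s + t - m)
  let v (m : ℤ) : R := (s + m)^2 * (t + m)^2
  2 * n^3 * (2 * (2 * n + 1) * (n + 1)^6 * recCoeff₀ n * u (n - 1) * u n * u (n + 1)
    + recCoeff₁ n * u (n - 1) * u n * v (n + 1)
    - 2 * recCoeff₂ n * u (n - 1) * v n * v (n + 1)
    - (n - 1)^4 * recCoeff₀ (n + 1) * v (n - 1) * v n * v (n + 1))

set_option maxRecDepth 100000 in
set_option maxHeartbeats 0 in
-- Both sides are expanded in full as polynomials in `n`, `s` and `t`.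
theorem recNumerator_eq_telescope (n : ℤ) (s t : R) :
    recNumerator n s t =
      (s^3 * (s + t) * cert n (s + 1) t
        - (s - n + 1) * (s + t - n + 1) * (s + n + 1)^2 * cert n s t)
      + (t^3 * (s + t) * cert n (t + 1) s
        - (t - n + 1) * (s + t - n + 1) * (t + n + 1)^2 * cert n t s) := by
  simp only [recNumerator, recCoeff₀, recCoeff₁, recCoeff₂, cert, Finset.sum_range_succ,
    Finset.sum_range_zero, certCoeff]
  push_cast
  ring

end Certificate

section HermitePartialFractions

open Polynomial TrivSqZeroExt

variable {A : Type*} [CommRing A]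

theorem fst_aeval_inl_add_eps (a : A) (P : A[X]) :
    (aeval (inl a + DualNumber.eps : DualNumber A) P).fst = P.eval a := by
  have h : (fstHom A A A) (inl a + DualNumber.eps) = a := by simp
  rw [← fstHom_apply (S := A), ← aeval_algHom_apply, h, coe_aeval_eq_eval]

theorem aeval_inl_add_eps_X_sub_C (a : A) :
    aeval (inl a + DualNumber.eps : DualNumber A) (X - C a) = DualNumber.eps := by
  rw [map_sub, aeval_X, aeval_C, algebraMap_eq_inl, add_sub_cancel_left]

theorem X_sub_C_sq_dvd_of_aeval_eq_zero {a : A} {P : A[X]}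
    (h : aeval (inl a + DualNumber.eps : DualNumber A) P = 0) : (X - C a)^2 ∣ P := by
  have hroot : P.IsRoot a := by rw [IsRoot, ← fst_aeval_inl_add_eps, h, fst_zero]
  obtain ⟨Q, rfl⟩ := dvd_iff_isRoot.mpr hroot
  rw [map_mul, aeval_inl_add_eps_X_sub_C] at h
  have hQ : Q.IsRoot a := by
    simpa [DualNumber.snd_mul, fst_aeval_inl_add_eps] using congrArg snd h
  exact sq (X - C a) ▸ mul_dvd_mul_left _ (dvd_iff_isRoot.mpr hQ)

/-- The value of the principal part `x₀ / (z - a)² + x₁ / (z - a)` encoded by the dual number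
`x₀ + x₁ ε`, in terms of `u = 1 / (z - a)`. -/
def principalPart (x : DualNumber A) (u : A) : A := x.fst * u^2 + x.snd * u

variable {ι : Type*}

theorem aeval_prod_X_sub_C_sq_eq_zero {s : Finset ι} {k : ι} (hk : k ∈ s) (a : ι → A) :
    aeval (inl (a k) + DualNumber.eps : DualNumber A) (∏ j ∈ s, (X - C (a j)))^2 = 0 := by
  obtain ⟨Q, hQ⟩ := Finset.dvd_prod_of_mem (fun j => X - C (a j)) hk
  rw [hQ, map_mul, mul_pow, aeval_inl_add_eps_X_sub_C, sq, DualNumber.eps_mul_eps, zero_mul]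

theorem eval_prod_X_sub_C_mul_prod {s : Finset ι} {a u : ι → A} {z : A}
    (hu : ∀ k ∈ s, u k * (z - a k) = 1) :
    (∏ k ∈ s, (X - C (a k))).eval z * ∏ k ∈ s, u k = 1 := by
  rw [eval_prod, ← Finset.prod_mul_distrib]
  refine Finset.prod_eq_one fun k hk => ?_
  rw [eval_sub, eval_X, eval_C, mul_comm, hu k hk]

variable [DecidableEq ι]

theorem aeval_sum_mul_prod_erase_sq {s : Finset ι} {k : ι} (hk : k ∈ s) (a : ι → A)
    (F : ι → DualNumber A) :
    aeval (inl (a k) + DualNumber.eps : DualNumber A)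
        (∑ j ∈ s, (C (F j).fst + C (F j).snd * (X - C (a j)))
          * (∏ i ∈ s.erase j, (X - C (a i)))^2)
      = F k * aeval (inl (a k) + DualNumber.eps : DualNumber A)
          (∏ i ∈ s.erase k, (X - C (a i)))^2 := by
  rw [map_sum, Finset.sum_eq_single_of_mem k hk]
  · rw [map_mul, map_add, map_mul, aeval_C, aeval_C, aeval_inl_add_eps_X_sub_C, map_pow]
    congr 1
    ext <;> simp [algebraMap_eq_inl]
  · intro j _ hjk
    rw [map_mul, map_pow,
      aeval_prod_X_sub_C_sq_eq_zero (Finset.mem_erase.mpr ⟨hjk.symm, hk⟩), mul_zero]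

theorem degree_sum_mul_prod_erase_sq_lt [Nontrivial A] (s : Finset ι) (a : ι → A)
    (F : ι → DualNumber A) :
    (∑ k ∈ s, (C (F k).fst + C (F k).snd * (X - C (a k)))
      * (∏ j ∈ s.erase k, (X - C (a j)))^2).degree < ↑(2 * s.card) := by
  refine (degree_sum_le _ _).trans_lt ((Finset.sup_lt_iff (WithBot.bot_lt_coe _)).mpr ?_)
  intro k hk
  have hlin : (C (F k).fst + C (F k).snd * (X - C (a k))).natDegree ≤ 1 := by compute_degree
  have hprod : ((∏ j ∈ s.erase k, (X - C (a j)))^2).natDegree ≤ 2 * (s.card - 1) :=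
    natDegree_pow_le_of_le 2
      (natDegree_finsetProd_X_sub_C_eq_card _ _ |>.trans (Finset.card_erase_of_mem hk)).le
  have hcard := Finset.card_pos.mpr ⟨k, hk⟩
  refine degree_le_natDegree.trans_lt (WithBot.coe_lt_coe.mpr ?_)
  exact (natDegree_mul_le_of_le hlin hprod).trans_lt (by simp only [Nat.cast_id]; omega)

theorem hermite_partial_fraction {s : Finset ι} {a : ι → A}
    (ha : ∀ i ∈ s, ∀ j ∈ s, i ≠ j → IsUnit (a i - a j)) {P : A[X]}
    (hP : P.natDegree ≤ 2 * s.card) {F : ι → DualNumber A}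
    (hF : ∀ k ∈ s, F k * aeval (inl (a k) + DualNumber.eps : DualNumber A)
        (∏ j ∈ s.erase k, (X - C (a j))) ^ 2
      = aeval (inl (a k) + DualNumber.eps : DualNumber A) P) :
    P = C (P.coeff (2 * s.card)) * (∏ j ∈ s, (X - C (a j))) ^ 2
      + ∑ k ∈ s, (C (F k).fst + C (F k).snd * (X - C (a k)))
        * (∏ j ∈ s.erase k, (X - C (a j)))^2 := by
  set c := P.coeff (2 * s.card)
  set W : A[X] := ∏ j ∈ s, (X - C (a j)) with hW
  nontriviality A
  have hmonic : (W^2).Monic := (monic_prod_of_monic _ _ fun j _ => monic_X_sub_C _).pow 2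
  have hdeg : (W^2).natDegree = 2 * s.card := by
    rw [Monic.natDegree_pow (monic_prod_of_monic _ _ fun j _ => monic_X_sub_C _),
      natDegree_finsetProd_X_sub_C_eq_card]
  refine eq_of_sub_eq_zero (by_contra fun hne => ?_)
  refine hmonic.not_dvd_of_degree_lt hne ?_ ?_
  · rw [degree_eq_natDegree hmonic.ne_zero, hdeg, ← sub_sub]
    refine (degree_sub_le _ _).trans_lt (max_lt ?_ ?_)
    · rw [degree_lt_iff_coeff_zero]
      intro m hm
      rw [coeff_sub, coeff_C_mul]
      rcases hm.eq_or_lt with rfl | hm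
      · rw [← hdeg, hmonic.coeff_natDegree, mul_one, hdeg, sub_self]
      · rw [coeff_eq_zero_of_natDegree_lt (hP.trans_lt hm),
          coeff_eq_zero_of_natDegree_lt (hdeg.trans_lt hm), mul_zero, sub_zero]
    · exact degree_sum_mul_prod_erase_sq_lt s a F
  · rw [hW, ← Finset.prod_pow]
    refine Finset.prod_dvd_of_coprime (fun i hi j hj hij => ?_) fun k hk => ?_
    · exact (isCoprime_X_sub_C_of_isUnit_sub (ha i hi j hj hij)).pow
    · refine X_sub_C_sq_dvd_of_aeval_eq_zero ?_
      rw [map_sub, map_add, aeval_sum_mul_prod_erase_sq hk, hF k hk, map_mul,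
        Finset.prod_pow, map_pow, aeval_prod_X_sub_C_sq_eq_zero hk, mul_zero, zero_add, sub_self]

theorem sum_principalPart_eq {s : Finset ι} {a : ι → A}
    (ha : ∀ i ∈ s, ∀ j ∈ s, i ≠ j → IsUnit (a i - a j)) {P : A[X]}
    (hP : P.natDegree ≤ 2 * s.card) {F : ι → DualNumber A}
    (hF : ∀ k ∈ s, F k * aeval (inl (a k) + DualNumber.eps : DualNumber A)
        (∏ j ∈ s.erase k, (X - C (a j))) ^ 2
      = aeval (inl (a k) + DualNumber.eps : DualNumber A) P)
    {z : A} (hz : P.eval z = 0) {u : ι → A} (hu : ∀ k ∈ s, u k * (z - a k) = 1) :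
    ∑ k ∈ s, principalPart (F k) (u k) = -P.coeff (2 * s.card) := by
  set U := ∏ j ∈ s, u j with hU
  have hWU : (∏ j ∈ s, (X - C (a j))).eval z * U = 1 := eval_prod_X_sub_C_mul_prod hu
  have hVU : ∀ k ∈ s, (∏ j ∈ s.erase k, (X - C (a j))).eval z * U = u k := fun k hk => by
    rw [hU, ← Finset.mul_prod_erase s u hk, mul_left_comm,
      eval_prod_X_sub_C_mul_prod fun j hj => hu j (Finset.mem_of_mem_erase hj), mul_one]
  have hexp := congrArg (eval z) (hermite_partial_fraction ha hP hF)
  simp only [hz, eval_add, eval_mul, eval_C, eval_pow, eval_finsetSum, eval_sub, eval_X] at hexp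
  have hterm : ∀ k ∈ s, principalPart (F k) (u k) = ((F k).fst + (F k).snd * (z - a k))
      * (∏ j ∈ s.erase k, (X - C (a j))).eval z ^ 2 * U^2 := fun k hk => by
    rw [mul_assoc, ← mul_pow, hVU k hk, principalPart]
    linear_combination -(F k).snd * u k * hu k hk
  rw [Finset.sum_congr rfl hterm, ← Finset.sum_mul]
  linear_combination -U^2 * hexp
    - P.coeff (2 * s.card) * ((∏ j ∈ s, (X - C (a j))).eval z * U + 1) * hWU

end HermitePartialFractions

section IteratedDualNumbers

open TrivSqZeroExt

/-- First-order jets in one variable, over `ℚ`. -/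
abbrev Jet : Type := DualNumber ℚ

/-- Jets of bidegree `(1, 1)` in the variables `s` and `t`: the outer infinitesimal is that of `s`,
the inner one that of `t`. -/
abbrev BiJet : Type := DualNumber Jet

namespace BiJet

/-- The bijet with constant coefficient `a`, `s`-coefficient `b`, `t`-coefficient `c` and
`st`-coefficient `d`. -/
def mk (a b c d : ℚ) : BiJet := inl (inl a + inr c) + inr (inl b + inr d)

@[simp] theorem mk_fst_fst (a b c d : ℚ) : (mk a b c d).fst.fst = a := by simp [mk]
@[simp] theorem mk_snd_fst (a b c d : ℚ) : (mk a b c d).snd.fst = b := by simp [mk]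
@[simp] theorem mk_fst_snd (a b c d : ℚ) : (mk a b c d).fst.snd = c := by simp [mk]
@[simp] theorem mk_snd_snd (a b c d : ℚ) : (mk a b c d).snd.snd = d := by simp [mk]

theorem ext {x y : BiJet} (hff : x.fst.fst = y.fst.fst) (hsf : x.snd.fst = y.snd.fst)
    (hfs : x.fst.snd = y.fst.snd) (hss : x.snd.snd = y.snd.snd) : x = y :=
  TrivSqZeroExt.ext (TrivSqZeroExt.ext hff hfs) (TrivSqZeroExt.ext hsf hss)

theorem mul_fst_fst (x y : BiJet) : (x * y).fst.fst = x.fst.fst * y.fst.fst := by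
  simp only [fst_mul]

theorem mul_snd_fst (x y : BiJet) :
    (x * y).snd.fst = x.fst.fst * y.snd.fst + x.snd.fst * y.fst.fst := by
  simp only [DualNumber.snd_mul, fst_add, fst_mul]

theorem mul_fst_snd (x y : BiJet) :
    (x * y).fst.snd = x.fst.fst * y.fst.snd + x.fst.snd * y.fst.fst := by
  simp only [fst_mul, DualNumber.snd_mul]

theorem mul_snd_snd (x y : BiJet) :
    (x * y).snd.snd = x.fst.fst * y.snd.snd + x.fst.snd * y.snd.fst
      + x.snd.fst * y.fst.snd + x.snd.snd * y.fst.fst := by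
  simp only [DualNumber.snd_mul, snd_add]
  ring

/-- The exchange of the variables `s` and `t`. -/
def swap : BiJet →+* BiJet where
  toFun x := mk x.fst.fst x.fst.snd x.snd.fst x.snd.snd
  map_one' := by apply ext <;> simp
  map_zero' := by apply ext <;> simp
  map_add' x y := by apply ext <;> simp
  map_mul' x y := by
    apply ext
    · simp only [mul_fst_fst, mk_fst_fst]
    · simp only [mul_snd_fst, mul_fst_snd, mk_fst_fst, mk_snd_fst]
    · simp only [mul_snd_fst, mul_fst_snd, mk_fst_fst, mk_fst_snd]
    · simp only [mul_snd_snd, mk_fst_fst, mk_snd_fst, mk_fst_snd, mk_snd_snd]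
      ring

@[simp] theorem swap_fst_fst (x : BiJet) : (swap x).fst.fst = x.fst.fst := by simp [swap]
@[simp] theorem swap_snd_fst (x : BiJet) : (swap x).snd.fst = x.fst.snd := by simp [swap]
@[simp] theorem swap_fst_snd (x : BiJet) : (swap x).fst.snd = x.snd.fst := by simp [swap]
@[simp] theorem swap_snd_snd (x : BiJet) : (swap x).snd.snd = x.snd.snd := by simp [swap]
@[simp] theorem swap_swap (x : BiJet) : swap (swap x) = x := by apply ext <;> simp

/-- A jet, seen as a bijet in the variable `t` alone. -/
def ofT : Jet →+* BiJet := inlHom Jet Jet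

/-- A jet, seen as a bijet in the variable `s` alone. -/
def ofS : Jet →+* BiJet := swap.comp ofT

@[simp] theorem ofT_fst (a : Jet) : (ofT a).fst = a := rfl
@[simp] theorem ofT_snd (a : Jet) : (ofT a).snd = 0 := rfl
@[simp] theorem ofS_fst (a : Jet) : (ofS a).fst = inl a.fst :=
  TrivSqZeroExt.ext (swap_fst_fst _) (swap_fst_snd _)
@[simp] theorem ofS_snd (a : Jet) : (ofS a).snd = inl a.snd :=
  TrivSqZeroExt.ext (swap_snd_fst _) (swap_snd_snd _)
@[simp] theorem swap_ofT (a : Jet) : swap (ofT a) = ofS a := rfl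
@[simp] theorem swap_ofS (a : Jet) : swap (ofS a) = ofT a := swap_swap (ofT a)

end BiJet

end IteratedDualNumbers

section LocalExpansions

open TrivSqZeroExt BiJet

/-- The expansion `-k + ε` of the coordinate at the point `-k`. -/
def coord (k : ℕ) : Jet := -(k : Jet) + DualNumber.eps

@[simp] theorem coord_fst (k : ℕ) : (coord k).fst = -(k : ℚ) := by simp [coord]
@[simp] theorem coord_snd (k : ℕ) : (coord k).snd = 1 := by simp [coord]

theorem coord_eq_coord_succ_add_one (k : ℕ) : coord k = coord (k + 1) + 1 := by
  simp only [coord]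
  push_cast
  ring

theorem coord_add_natCast_self_sq (k : ℕ) : (coord k + (k : Jet))^2 = 0 := by
  rw [coord, add_right_comm, neg_add_cancel, zero_add, sq, DualNumber.eps_mul_eps]

/-- The expansion of `s` at the point `-k`. -/
def coordS (k : ℕ) : BiJet := ofS (coord k)

/-- The expansion of `t` at the point `-k`. -/
def coordT (k : ℕ) : BiJet := ofT (coord k)

@[simp] theorem swap_coordS (k : ℕ) : swap (coordS k) = coordT k := swap_ofS _
@[simp] theorem swap_coordT (k : ℕ) : swap (coordT k) = coordS k := swap_ofT _

theorem coordS_eq (k : ℕ) : coordS k = inl (-(k : Jet)) + DualNumber.eps := by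
  apply BiJet.ext <;> simp [coordS]

/-- The generalized harmonic number `∑_{i=1}^k 1 / i ^ r`. -/
def genHarmonic (r k : ℕ) : ℚ := ∑ i ∈ Finset.range k, 1 / ((i : ℚ) + 1)^r

theorem genHarmonic_succ (r k : ℕ) :
    genHarmonic r (k + 1) = genHarmonic r k + 1 / ((k : ℚ) + 1)^r :=
  Finset.sum_range_succ _ _

/-- The expansion of `n! (x + k) / ∏_{j=0}^n (x + j)` at `x = -k`, and `0` if `n < k`. -/
def poleFactor (n k : ℕ) : Jet :=
  inl ((n.choose k : ℚ) * (-1)^k)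
    + inr ((n.choose k : ℚ) * (-1)^k * (genHarmonic 1 k - genHarmonic 1 (n - k)))

@[simp] theorem poleFactor_fst (n k : ℕ) : (poleFactor n k).fst = (n.choose k : ℚ) * (-1)^k := by
  simp [poleFactor]

@[simp] theorem poleFactor_snd (n k : ℕ) : (poleFactor n k).snd =
    (n.choose k : ℚ) * (-1)^k * (genHarmonic 1 k - genHarmonic 1 (n - k)) := by
  simp [poleFactor]

theorem poleFactor_of_lt {n k : ℕ} (h : n < k) : poleFactor n k = 0 := by
  ext <;> simp [Nat.choose_eq_zero_of_lt h]

theorem poleFactor_succ_mul {n k : ℕ} (h : k ≤ n) :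
    poleFactor (n + 1) k * (coord k + ((n : Jet) + 1)) = ((n : Jet) + 1) * poleFactor n k := by
  have hpos : (0 : ℚ) < (n : ℚ) + 1 - k := by
    have : (k : ℚ) ≤ n := Nat.cast_le.mpr h
    linarith
  have hchoose : ((n + 1).choose k : ℚ) * ((n : ℚ) + 1 - k) = (n + 1) * n.choose k := by
    have hnat := Nat.choose_mul_succ_eq n k
    rw [← @Nat.cast_inj ℚ] at hnat
    push_cast [Nat.cast_sub (h.trans n.le_succ)] at hnat
    linear_combination -hnat
  have hharm : (genHarmonic 1 (n + 1 - k) - genHarmonic 1 (n - k)) * ((n : ℚ) + 1 - k) = 1 := by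
    rw [Nat.sub_add_comm h, genHarmonic_succ, Nat.cast_sub h]
    rw [add_sub_cancel_left, pow_one, show (n : ℚ) - k + 1 = n + 1 - k by ring,
      one_div_mul_cancel hpos.ne']
  ext
  · simp only [fst_mul, poleFactor_fst, fst_add, coord_fst, fst_natCast, fst_one]
    linear_combination (-1)^k * hchoose
  · simp only [DualNumber.snd_mul, poleFactor_fst, poleFactor_snd, fst_add, snd_add, coord_fst,
      coord_snd, fst_natCast, snd_natCast, fst_one, snd_one]
    linear_combination (-1)^k * (genHarmonic 1 k - genHarmonic 1 (n - k)) * hchoose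
      - ((n + 1).choose k) * (-1)^k * hharm

theorem poleFactor_succ_sq_mul (n k : ℕ) :
    poleFactor (n + 1) k ^ 2 * (coord k + ((n : Jet) + 1))^2
      = ((n : Jet) + 1)^2 * poleFactor n k ^ 2 := by
  rcases Nat.lt_trichotomy k (n + 1) with h | rfl | h
  · rw [← mul_pow, poleFactor_succ_mul (Nat.le_of_lt_succ h), mul_pow]
  · rw [poleFactor_of_lt n.lt_succ_self, ← Nat.cast_add_one, coord_add_natCast_self_sq]
    ring
  · rw [poleFactor_of_lt h, poleFactor_of_lt (n.lt_succ_self.trans h)]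
    ring

theorem poleFactor_mul_eq_poleFactor_succ_mul {n k : ℕ} (h : k + 1 ≤ n) :
    poleFactor n k * (coord (k + 1) + ((n : Jet) + 1))
      = poleFactor n (k + 1) * coord (k + 1) := by
  have hpos : (0 : ℚ) < (n : ℚ) - k := sub_pos.mpr (Nat.cast_lt.mpr h)
  have hchoose : (n.choose (k + 1) : ℚ) * ((k : ℚ) + 1) = n.choose k * ((n : ℚ) - k) := by
    rw [← Nat.cast_sub (Nat.le_of_succ_le h)]
    exact_mod_cast Nat.choose_succ_right_eq n k
  have hharm : (genHarmonic 1 (n - k) - genHarmonic 1 (n - (k + 1))) * ((n : ℚ) - k) = 1 := by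
    rw [show n - k = n - (k + 1) + 1 by omega, genHarmonic_succ, Nat.cast_sub h]
    have := hpos.ne'
    push_cast
    rw [add_sub_cancel_left, pow_one, show (n : ℚ) - (k + 1) + 1 = n - k by ring,
      one_div_mul_cancel this]
  have hharm' : (genHarmonic 1 (k + 1) - genHarmonic 1 k) * ((k : ℚ) + 1) = 1 := by
    rw [genHarmonic_succ, add_sub_cancel_left, pow_one, one_div_mul_cancel (by positivity)]
  ext
  · simp only [fst_mul, poleFactor_fst, fst_add, coord_fst, fst_natCast, fst_one, Nat.cast_add_one]
    linear_combination (-(-1)^k) * hchoose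
  · simp only [DualNumber.snd_mul, poleFactor_fst, poleFactor_snd, fst_add, snd_add, coord_fst,
      coord_snd, fst_natCast, snd_natCast, fst_one, snd_one, Nat.cast_add_one]
    linear_combination (-(-1)^k) * (genHarmonic 1 k - genHarmonic 1 (n - (k + 1))) * hchoose
      - (n.choose k) * (-1)^k * hharm - (n.choose (k + 1) : ℚ) * (-1)^k * hharm'

theorem poleFactor_self_succ_mul (k : ℕ) :
    poleFactor (k + 1) (k + 1) * coord (k + 1) = ((k : Jet) + 1) * poleFactor k k := by
  rw [← poleFactor_mul_eq_poleFactor_succ_mul le_rfl, ← poleFactor_succ_mul le_rfl,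
    coord_eq_coord_succ_add_one k, Nat.cast_add_one]
  ring

theorem poleFactor_self_mul_prod (k : ℕ) :
    poleFactor k k * ∏ j ∈ Finset.range k, coord (j + 1) = (k.factorial : Jet) := by
  induction k with
  | zero => ext <;> simp
  | succ k ih =>
    rw [Finset.prod_range_succ, Nat.factorial_succ, Nat.cast_mul, Nat.cast_add_one, ← ih]
    linear_combination (∏ j ∈ Finset.range k, coord (j + 1)) * poleFactor_self_succ_mul k

theorem poleFactor_mul_prod_erase {n k : ℕ} (h : k ≤ n) :
    poleFactor n k * ∏ j ∈ (Finset.range (n + 1)).erase k, (coord k + (j : Jet))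
      = (n.factorial : Jet) := by
  induction n, h using Nat.le_induction with
  | base =>
    rw [← poleFactor_self_mul_prod k, Finset.range_add_one,
      Finset.erase_insert Finset.notMem_range_self, ← Finset.prod_range_reflect]
    congr 1
    refine Finset.prod_congr rfl fun j hj => ?_
    have hj' : j + 1 ≤ k := Finset.mem_range.mp hj
    rw [Nat.sub_sub, add_comm 1 j, Nat.cast_sub hj', coord, coord]
    ring
  | succ n hkn ih =>
    rw [Finset.range_add_one, Finset.erase_insert_of_ne (by omega),
      Finset.prod_insert (by simp), Nat.factorial_succ, Nat.cast_mul, ← ih]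
    push_cast
    linear_combination (∏ j ∈ (Finset.range (n + 1)).erase k, (coord k + (j : Jet)))
      * poleFactor_succ_mul hkn

section ShiftedProd

variable {R S : Type*} [CommRing R] [CommRing S]

/-- The product `(x - 1) (x - 2) ⋯ (x - n)`. -/
def shiftedProd (n : ℕ) (x : R) : R := ∏ j ∈ Finset.range n, (x - ((j : R) + 1))

theorem shiftedProd_succ (n : ℕ) (x : R) :
    shiftedProd (n + 1) x = shiftedProd n x * (x - ((n : R) + 1)) :=
  Finset.prod_range_succ _ _

theorem shiftedProd_succ_add_one (n : ℕ) (x : R) :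
    shiftedProd (n + 1) (x + 1) = shiftedProd n x * x := by
  rw [shiftedProd, Finset.prod_range_succ']
  simp [shiftedProd, add_sub_add_right_eq_sub]

theorem shiftedProd_succ_one (n : ℕ) : shiftedProd (n + 1) (1 : R) = 0 := by
  rw [← zero_add (1 : R), shiftedProd_succ_add_one, mul_zero]

theorem map_shiftedProd {F : Type*} [FunLike F R S] [RingHomClass F R S] (f : F) (n : ℕ) (x : R) :
    f (shiftedProd n x) = shiftedProd n (f x) := by
  simp [shiftedProd]

end ShiftedProd

end LocalExpansions

section Telescoping

open TrivSqZeroExt BiJet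

section CertNumerator

open Polynomial

variable {R S : Type*} [CommRing R] [CommRing S]

/-- The numerator of the rational function whose differences telescope the recursion at
`n = m + 2`; its denominator is `∏_{j ≤ m + 3} (s + j)² (t + j)²`. -/
def certNumerator (m : ℕ) (s t : R) : R :=
  shiftedProd (m + 1) s * shiftedProd m t * shiftedProd (m + 1) (s + t) * (s + ((m : R) + 3))^2
    * cert (m + 2) s t

theorem map_certNumerator {F : Type*} [FunLike F R S] [RingHomClass F R S] (f : F) (m : ℕ)
    (s t : R) : f (certNumerator m s t) = certNumerator m (f s) (f t) := by
  simp only [certNumerator, map_mul, map_shiftedProd, map_pow, map_add, map_cert, map_natCast,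
    map_ofNat]

theorem certNumerator_one (m : ℕ) (t : R) : certNumerator m 1 t = 0 := by
  simp only [certNumerator, shiftedProd_succ_one, zero_mul]

theorem certNumerator_of_add_eq_one (m : ℕ) {s t : R} (h : s + t = 1) :
    certNumerator m s t = 0 := by
  simp only [certNumerator, h, shiftedProd_succ_one, mul_zero, zero_mul]

theorem natDegree_shiftedProd_le (n : ℕ) {P : R[X]} (hP : P.natDegree ≤ 1) :
    (shiftedProd n P).natDegree ≤ n := by
  refine (natDegree_prod_le _ _).trans ((Finset.sum_le_card_nsmul _ _ 1 fun j _ => ?_).trans ?_)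
  · rw [← Nat.cast_add_one, ← C_eq_natCast, natDegree_sub_C]
    exact hP
  · rw [Finset.card_range, smul_eq_mul, mul_one]

theorem natDegree_shiftedProd_C (n : ℕ) (a : R) : (shiftedProd n (C a)).natDegree = 0 := by
  rw [← map_shiftedProd, natDegree_C]

theorem natDegree_cert_left_le (n : ℤ) (t : R) : (cert n X (C t)).natDegree ≤ 4 := by
  refine natDegree_sum_le_of_forall_le _ _ fun i hi =>
    natDegree_sum_le_of_forall_le _ _ fun j _ => ?_
  have hi' : i ≤ 4 := Nat.lt_succ_iff.mp (Finset.mem_range.mp hi)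
  rw [← C_eq_intCast, ← C_pow]
  exact (natDegree_mul_C_le _ _).trans ((natDegree_C_mul_X_pow_le _ _).trans hi')

theorem natDegree_cert_right_le (n : ℤ) (s : R) : (cert n (C s) X).natDegree ≤ 5 := by
  refine natDegree_sum_le_of_forall_le _ _ fun i _ =>
    natDegree_sum_le_of_forall_le _ _ fun j hj => ?_
  have hj' : j ≤ 5 := Nat.lt_succ_iff.mp (Finset.mem_range.mp hj)
  rw [← C_eq_intCast, ← C_pow, ← C_mul]
  exact (natDegree_C_mul_X_pow_le _ _).trans hj'

theorem natDegree_certNumerator_left_le (m : ℕ) (t : R) :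
    (certNumerator m X (C t)).natDegree ≤ 2 * m + 8 := by
  have hs := natDegree_shiftedProd_le (m + 1) (P := (X : R[X])) natDegree_X_le
  have hst := natDegree_shiftedProd_le (m + 1) (P := X + C t) (by compute_degree)
  have hsq : ((X + ((m : R[X]) + 3))^2).natDegree ≤ 2 := by compute_degree
  have := natDegree_mul_le_of_le (natDegree_mul_le_of_le (natDegree_mul_le_of_le
    (natDegree_mul_le_of_le hs (natDegree_shiftedProd_C m t).le) hst) hsq)
    (natDegree_cert_left_le (m + 2) t)
  exact this.trans (by omega)

theorem natDegree_certNumerator_right_le (m : ℕ) (s : R) :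
    (certNumerator m (C s) X).natDegree ≤ 2 * m + 6 := by
  have ht := natDegree_shiftedProd_le m (P := (X : R[X])) natDegree_X_le
  have hst := natDegree_shiftedProd_le (m + 1) (P := C s + X) (by compute_degree)
  have hsq : ((C s + ((m : R[X]) + 3))^2).natDegree ≤ 0 := by compute_degree
  have := natDegree_mul_le_of_le (natDegree_mul_le_of_le (natDegree_mul_le_of_le
    (natDegree_mul_le_of_le (natDegree_shiftedProd_C (m + 1) s).le ht) hst) hsq)
    (natDegree_cert_right_le (m + 2) s)
  exact this.trans (by omega)

end CertNumerator

/-- The expansion, at the double poles `s = -k` and `t = -l`, of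
`N!⁴ ∏_{j=1}^m (s - j) (t - j) (s + t - j) / ∏_{j=0}^N (s + j)² (t + j)²`, multiplied by
`(s + k)² (t + l)²`. -/
def poleJet (N m k l : ℕ) : BiJet :=
  ofS (poleFactor N k)^2 * ofT (poleFactor N l)^2
    * (shiftedProd m (coordS k) * shiftedProd m (coordT l) * shiftedProd m (coordS k + coordT l))

theorem swap_poleJet (N m k l : ℕ) : swap (poleJet N m k l) = poleJet N m l k := by
  simp only [poleJet, map_mul, map_pow, map_shiftedProd, map_add, swap_ofS, swap_ofT, swap_coordS,
    swap_coordT, add_comm (coordT k)]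
  ring

/-- The expansion of the certificate at `s = -k` and `t = -l`, normalized like `poleJet`. -/
def certJet (m k l : ℕ) : BiJet :=
  ofS (poleFactor (m + 3) k)^2 * ofT (poleFactor (m + 3) l)^2
    * certNumerator m (coordS k) (coordT l)

theorem coordS_eq_coordS_succ_add_one (k : ℕ) : coordS k = coordS (k + 1) + 1 := by
  rw [coordS, coord_eq_coord_succ_add_one, map_add, map_one, coordS]

theorem coordS_add_natCast_self_sq (k : ℕ) : (coordS k + (k : BiJet))^2 = 0 := by
  rw [coordS, ← map_natCast ofS, ← map_add, ← map_pow, coord_add_natCast_self_sq, map_zero]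

theorem coordS_zero_cubed : coordS 0 ^ 3 = 0 := by
  have h := coordS_add_natCast_self_sq 0
  rw [Nat.cast_zero, add_zero] at h
  rw [pow_succ, h, zero_mul]

theorem certJet_eq (m k l : ℕ) :
    certJet m k l = poleJet (m + 3) m k l * ((coordS k - ((m : BiJet) + 2) + 1)
      * (coordS k + coordT l - ((m : BiJet) + 2) + 1) * (coordS k + ((m : BiJet) + 2) + 1)^2
      * cert (m + 2) (coordS k) (coordT l)) := by
  simp only [certJet, poleJet, certNumerator, shiftedProd_succ]
  ring

theorem certJet_eq_succ {m k : ℕ} (l : ℕ) (hk : k + 1 ≤ m + 3) :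
    certJet m k l = poleJet (m + 3) m (k + 1) l * (coordS (k + 1)^3
      * (coordS (k + 1) + coordT l) * cert (m + 2) (coordS (k + 1) + 1) (coordT l)) := by
  have h := congrArg ofS (poleFactor_mul_eq_poleFactor_succ_mul hk)
  rw [map_mul, map_mul, map_add, map_add, map_natCast, map_one, ← coordS, Nat.cast_add] at h
  simp only [certJet, poleJet, certNumerator]
  rw [coordS_eq_coordS_succ_add_one k, add_right_comm _ 1 (coordT l), shiftedProd_succ_add_one,
    shiftedProd_succ_add_one]
  generalize coordS (k + 1) = s at h ⊢
  generalize cert (m + 2) (s + 1) (coordT l) = c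
  linear_combination (ofT (poleFactor (m + 3) l)^2 * shiftedProd m s
      * shiftedProd m (coordT l) * shiftedProd m (s + coordT l) * s * (s + coordT l) * c)
    * (ofS (poleFactor (m + 3) k) * (s + ((m : BiJet) + (3 : ℕ) + 1))
      + ofS (poleFactor (m + 3) (k + 1)) * s) * h

theorem certJet_last (m l : ℕ) : certJet m (m + 3) l = 0 := by
  have h := coordS_add_natCast_self_sq (m + 3)
  push_cast at h
  simp only [certJet, certNumerator, h, mul_zero, zero_mul]

/-- The expansion of the certificate at `s = 1 - k` and `t = -l`: the certificate has no pole at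
`s = 1`. -/
def prevCertJet (m : ℕ) : ℕ → ℕ → BiJet
  | 0, _ => 0
  | k + 1, l => certJet m k l

theorem prevCertJet_eq {m k : ℕ} (l : ℕ) (hk : k ≤ m + 3) :
    prevCertJet m k l = poleJet (m + 3) m k l * (coordS k^3
      * (coordS k + coordT l) * cert (m + 2) (coordS k + 1) (coordT l)) := by
  cases k with
  | zero => rw [coordS_zero_cubed, zero_mul, zero_mul, mul_zero, prevCertJet]
  | succ k => exact certJet_eq_succ l hk

theorem poleJet_mul_recNumerator {m k l : ℕ} (hk : k ≤ m + 3) (hl : l ≤ m + 3) :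
    poleJet (m + 3) m k l * recNumerator (m + 2) (coordS k) (coordT l)
      = (prevCertJet m k l - certJet m k l) + swap (prevCertJet m l k - certJet m l k) := by
  rw [map_sub, prevCertJet_eq l hk, prevCertJet_eq k hl, certJet_eq, certJet_eq,
    recNumerator_eq_telescope]
  simp only [map_mul, map_pow, map_sub, map_add, map_cert, swap_poleJet, swap_coordS, swap_coordT,
    map_one, map_natCast, map_ofNat]
  push_cast
  ring

end Telescoping

section Residues

open TrivSqZeroExt BiJet

theorem isUnit_natCast_sub_natCast {i j : ℕ} (h : i ≠ j) : IsUnit (-(i : Jet) - -(j : Jet)) := by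
  rw [isUnit_iff_isUnit_fst, fst_sub, fst_neg, fst_neg, fst_natCast, fst_natCast,
    isUnit_iff_ne_zero,
    neg_sub_neg, sub_ne_zero]
  exact_mod_cast h.symm

open Polynomial in
theorem sum_principalPart_poleFactor {N : ℕ} {P : Jet[X]} (hP : P.natDegree ≤ 2 * (N + 1))
    {z : Jet} (hz : P.eval z = 0) (hz' : ∀ k : ℕ, (z + (k : Jet)).fst ≠ 0) :
    ∑ k ∈ Finset.range (N + 1),
        principalPart (ofS (poleFactor N k)^2 * aeval (coordS k) P) (z + (k : Jet))⁻¹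
      = -((N.factorial : Jet)^2 * P.coeff (2 * (N + 1))) := by
  have h := sum_principalPart_eq (s := Finset.range (N + 1)) (a := fun k => -(k : Jet))
    (P := C ((N.factorial : Jet)^2) * P) (z := z)
    (F := fun k => ofS (poleFactor N k)^2 * aeval (coordS k) P) (u := fun k => (z + (k : Jet))⁻¹)
    (fun i _ j _ hij => isUnit_natCast_sub_natCast hij)
    ((natDegree_C_mul_le _ _).trans (by rwa [Finset.card_range])) (fun k hk => ?_)
    (by rw [eval_mul, hz, mul_zero])
    (fun k _ => by rw [sub_neg_eq_add, TrivSqZeroExt.inv_mul_cancel (hz' k)])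
  · rw [h, coeff_C_mul, Finset.card_range]
  · have hprod : ofS (poleFactor N k)
        * ∏ j ∈ (Finset.range (N + 1)).erase k, (coordS k + (j : BiJet)) =
      (N.factorial : BiJet) := by
      simpa only [coordS, map_mul, map_prod, map_add, map_natCast] using congrArg ofS
        (poleFactor_mul_prod_erase (Nat.lt_succ_iff.mp (Finset.mem_range.mp hk)))
    rw [← coordS_eq, map_mul, aeval_C, map_pow, map_natCast, ← hprod]
    simp only [map_prod, map_add, aeval_X, map_neg, map_natCast, sub_neg_eq_add]
    ring

theorem algebraMap_jet_apply (a : Jet) : algebraMap Jet BiJet a = ofT a := rfl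

open Polynomial in
theorem sum_principalPart_certJet (m l : ℕ) {z : Jet}
    (hz : certNumerator m z (coord l) = 0) (hz' : ∀ k : ℕ, (z + (k : Jet)).fst ≠ 0) :
    ∑ k ∈ Finset.range (m + 3 + 1), principalPart (certJet m k l) (z + (k : Jet))⁻¹
      = -(((m + 3).factorial : Jet)^2 * (poleFactor (m + 3) l ^ 2
        * (certNumerator m X (C (coord l))).coeff (2 * (m + 3 + 1)))) := by
  have h := sum_principalPart_poleFactor (N := m + 3)
    (P := C (poleFactor (m + 3) l ^ 2) * certNumerator m X (C (coord l)))
    ((natDegree_C_mul_le _ _).trans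
      ((natDegree_certNumerator_left_le m _).trans (by omega))) (z := z)
      (by rw [eval_mul, ← coe_evalRingHom, map_certNumerator, coe_evalRingHom, eval_X, eval_C,
        eval_C, hz, mul_zero]) hz'
  rw [← coeff_C_mul, ← h]
  refine Finset.sum_congr rfl fun k _ => ?_
  rw [map_mul, map_certNumerator, aeval_X, aeval_C, aeval_C, algebraMap_jet_apply,
    algebraMap_jet_apply, map_pow, ← coordT, certJet, mul_assoc]

open Polynomial in
theorem sum_principalPart_swap_certJet (m k : ℕ) {z : Jet}
    (hz : certNumerator m (coord k) z = 0) (hz' : ∀ l : ℕ, (z + (l : Jet)).fst ≠ 0) :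
    ∑ l ∈ Finset.range (m + 3 + 1), principalPart (swap (certJet m k l)) (z + (l : Jet))⁻¹ = 0 := by
  have hdeg := (natDegree_C_mul_le (poleFactor (m + 3) k ^ 2) _).trans
    (natDegree_certNumerator_right_le m (coord k))
  have h := sum_principalPart_poleFactor (N := m + 3) (z := z)
    (P := C (poleFactor (m + 3) k ^ 2) * certNumerator m (C (coord k)) X) (hdeg.trans (by omega))
      (by rw [eval_mul, ← coe_evalRingHom, map_certNumerator, coe_evalRingHom, eval_X, eval_C,
        eval_C, hz, mul_zero]) hz'
  rw [coeff_eq_zero_of_natDegree_lt (hdeg.trans_lt (by omega)), mul_zero, neg_zero] at h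
  rw [← h]
  refine Finset.sum_congr rfl fun l _ => ?_
  rw [certJet, map_mul, map_mul, map_pow, map_pow, swap_ofS, swap_ofT, map_certNumerator,
    swap_coordS, swap_coordT, map_mul, map_certNumerator, aeval_X, aeval_C, aeval_C,
    algebraMap_jet_apply, algebraMap_jet_apply, map_pow, ← coordT, mul_comm (ofT _ ^ 2), mul_assoc]

theorem fst_one_add_natCast (k : ℕ) : ((1 : Jet) + (k : Jet)).fst = (k : ℚ) + 1 := by
  rw [fst_add, fst_one, fst_natCast, add_comm]

theorem fst_one_add_natCast_ne_zero (k : ℕ) : ((1 : Jet) + (k : Jet)).fst ≠ 0 := by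
  rw [fst_one_add_natCast]
  positivity

theorem fst_one_sub_coord_add_natCast (l k : ℕ) :
    (1 - coord l + (k : Jet)).fst = (k : ℚ) + l + 1 := by
  rw [fst_add, fst_sub, fst_one, coord_fst, fst_natCast]
  ring

theorem fst_one_sub_coord_add_natCast_ne_zero (l k : ℕ) :
    (1 - coord l + (k : Jet)).fst ≠ 0 := by
  rw [fst_one_sub_coord_add_natCast]
  positivity

section Steps

variable (α β : ℕ → ℚ) (k l : ℕ)

/-- The value on `1` of the functional in `Weights.pairing_succ_sub`, which takes residues with
weights `α` and `β`. -/
def stepFF : ℚ := β l / ((k : ℚ) + 1)^2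
  - ((β l + β k) / ((k : ℚ) + l + 1)^2 + 2 * (α l + α k) / ((k : ℚ) + l + 1)^3)

/-- The value on `s` of the same functional as in `stepFF`. -/
def stepSF : ℚ := β l / ((k : ℚ) + 1)
  - (β l / ((k : ℚ) + l + 1) + (α l + α k) / ((k : ℚ) + l + 1)^2)

/-- The value on `t` of the same functional as in `stepFF`. -/
def stepFS : ℚ := α l / ((k : ℚ) + 1)^2
  - (β k / ((k : ℚ) + l + 1) + (α l + α k) / ((k : ℚ) + l + 1)^2)

/-- The value on `s * t` of the same functional as in `stepFF`. -/
def stepSS : ℚ := α l / ((k : ℚ) + 1) - (α l + α k) / ((k : ℚ) + l + 1)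

end Steps

/-- A symmetric family of linear functionals on bijets, indexed by the poles `(-k, -l)`, whose
differences in `k` are sums of residues at `s = 1` and on the line `s + t = 1`. The numbers
`ff k l`, `sf k l`, `sf l k` and `ss k l` are the values on `1`, `s`, `t` and `s * t`; `α` and `β`
are the weights of the residues. -/
structure Weights where
  α : ℕ → ℚ
  β : ℕ → ℚ
  ff : ℕ → ℕ → ℚ
  sf : ℕ → ℕ → ℚ
  ss : ℕ → ℕ → ℚ
  ff_symm : ∀ k l, ff k l = ff l k
  ss_symm : ∀ k l, ss k l = ss l k
  ff_succ : ∀ k l, ff (k + 1) l - ff k l = stepFF α β k l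
  sf_succ : ∀ k l, sf (k + 1) l - sf k l = stepSF α β k l
  sf_succ_right : ∀ k l, sf l (k + 1) - sf l k = stepFS α β k l
  ss_succ : ∀ k l, ss (k + 1) l - ss k l = stepSS α k l

namespace Weights

variable (μ : Weights)

/-- The functional at the pole `(-k, -l)`. -/
def pairing (k l : ℕ) : BiJet →ₗ[ℚ] ℚ where
  toFun x := μ.ff k l * x.fst.fst + μ.sf k l * x.snd.fst + μ.sf l k * x.fst.snd
    + μ.ss k l * x.snd.snd
  map_add' x y := by simp only [fst_add, snd_add]; ring
  map_smul' c x := by simp only [fst_smul, snd_smul, smul_eq_mul, RingHom.id_apply]; ring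

theorem pairing_apply (k l : ℕ) (x : BiJet) : μ.pairing k l x = μ.ff k l * x.fst.fst
    + μ.sf k l * x.snd.fst + μ.sf l k * x.fst.snd + μ.ss k l * x.snd.snd := rfl

theorem pairing_swap (k l : ℕ) (x : BiJet) : μ.pairing k l (swap x) = μ.pairing l k x := by
  rw [pairing_apply, pairing_apply, swap_fst_fst, swap_snd_fst, swap_fst_snd, swap_snd_snd,
    μ.ff_symm k l, μ.ss_symm k l]
  ring

/-- The functional on jets that weighs the residues at `t = -l`. -/
def residue (l : ℕ) : Jet →ₗ[ℚ] ℚ where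
  toFun a := μ.β l * a.fst + μ.α l * a.snd
  map_add' x y := by simp only [fst_add, snd_add]; ring
  map_smul' c x := by simp only [fst_smul, snd_smul, smul_eq_mul, RingHom.id_apply]; ring

theorem residue_principalPart (l : ℕ) (x : BiJet) (u : Jet) :
    μ.residue l (principalPart x u) = μ.β l * (x.fst.fst * u.fst^2 + x.snd.fst * u.fst)
      + μ.α l * (x.fst.snd * u.fst^2 + 2 * x.fst.fst * u.fst * u.snd
        + x.snd.fst * u.snd + x.snd.snd * u.fst) := by
  simp only [residue, principalPart, LinearMap.coe_mk, AddHom.coe_mk, fst_add, snd_add, fst_mul,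
    DualNumber.snd_mul, sq]
  ring

theorem pairing_succ_sub (k l : ℕ) (x : BiJet) :
    μ.pairing (k + 1) l x - μ.pairing k l x
      = μ.residue l (principalPart x (1 + (k : Jet))⁻¹)
        - μ.residue l (principalPart x (1 - coord l + (k : Jet))⁻¹)
        - μ.residue k (principalPart (swap x) (1 - coord k + (l : Jet))⁻¹) := by
  have hff := μ.ff_succ k l
  have hsf := μ.sf_succ k l
  have hfs := μ.sf_succ_right k l
  have hss := μ.ss_succ k l
  simp only [pairing_apply, residue_principalPart, fst_inv, snd_inv,
    fst_one_add_natCast, fst_one_sub_coord_add_natCast, snd_add, snd_sub, snd_one, snd_natCast,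
    coord_snd, swap_fst_fst, swap_snd_fst, swap_fst_snd, swap_snd_snd, add_comm (l : ℚ) k,
    smul_eq_mul, MulOpposite.smul_eq_mul_unop, MulOpposite.unop_op]
  simp only [stepFF, stepSF, stepFS, stepSS, div_eq_mul_inv, ← inv_pow] at hff hsf hfs hss
  linear_combination x.fst.fst * hff + x.snd.fst * hsf + x.fst.snd * hfs + x.snd.snd * hss

theorem sum_pairing_succ_sub_certJet (m : ℕ) :
    ∑ l ∈ Finset.range (m + 3 + 1), ∑ k ∈ Finset.range (m + 3 + 1),
      (μ.pairing (k + 1) l (certJet m k l) - μ.pairing k l (certJet m k l)) = 0 := by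
  have hs : ∀ l, ∑ k ∈ Finset.range (m + 3 + 1),
        μ.residue l (principalPart (certJet m k l) (1 + (k : Jet))⁻¹)
      = ∑ k ∈ Finset.range (m + 3 + 1),
        μ.residue l (principalPart (certJet m k l) (1 - coord l + (k : Jet))⁻¹) := fun l => by
    rw [← map_sum, ← map_sum,
      sum_principalPart_certJet m l (certNumerator_one m _) fst_one_add_natCast_ne_zero,
      sum_principalPart_certJet m l (certNumerator_of_add_eq_one m (sub_add_cancel _ _))
        (fst_one_sub_coord_add_natCast_ne_zero l)]
  have ht : ∀ k, ∑ l ∈ Finset.range (m + 3 + 1),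
      μ.residue k (principalPart (swap (certJet m k l)) (1 - coord k + (l : Jet))⁻¹) = 0 :=
    fun k => by
      rw [← map_sum, sum_principalPart_swap_certJet m k
        (certNumerator_of_add_eq_one m (add_sub_cancel _ _))
        (fst_one_sub_coord_add_natCast_ne_zero k), map_zero]
  simp only [pairing_succ_sub, Finset.sum_sub_distrib, hs, sub_self, zero_sub,
    Finset.sum_neg_distrib]
  rw [Finset.sum_comm, Finset.sum_congr rfl fun k _ => ht k, Finset.sum_const_zero, neg_zero]

theorem sum_pairing_prevCertJet_sub_certJet (m : ℕ) :
    ∑ l ∈ Finset.range (m + 3 + 1), ∑ k ∈ Finset.range (m + 3 + 1),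
      μ.pairing k l (prevCertJet m k l - certJet m k l) = 0 := by
  rw [← μ.sum_pairing_succ_sub_certJet m]
  refine Finset.sum_congr rfl fun l _ => ?_
  simp only [map_sub, Finset.sum_sub_distrib]
  congr 1
  rw [Finset.sum_range_succ', Finset.sum_range_succ _ (m + 3), certJet_last, prevCertJet, map_zero,
    map_zero]
  rfl

theorem sum_pairing_poleJet_mul_recNumerator (m : ℕ) :
    ∑ k ∈ Finset.range (m + 3 + 1), ∑ l ∈ Finset.range (m + 3 + 1),
      μ.pairing k l (poleJet (m + 3) m k l * recNumerator (m + 2) (coordS k) (coordT l)) = 0 := by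
  have h : ∀ k ∈ Finset.range (m + 3 + 1), ∀ l ∈ Finset.range (m + 3 + 1),
      μ.pairing k l (poleJet (m + 3) m k l * recNumerator (m + 2) (coordS k) (coordT l))
        = μ.pairing k l (prevCertJet m k l - certJet m k l)
          + μ.pairing l k (prevCertJet m l k - certJet m l k) := fun k hk l hl => by
    rw [poleJet_mul_recNumerator (Nat.lt_succ_iff.mp (Finset.mem_range.mp hk))
      (Nat.lt_succ_iff.mp (Finset.mem_range.mp hl)), map_add, pairing_swap]
  rw [Finset.sum_congr rfl fun k hk => Finset.sum_congr rfl (h k hk)]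
  simp only [Finset.sum_add_distrib]
  rw [Finset.sum_comm, sum_pairing_prevCertJet_sub_certJet, add_zero]

end Weights

end Residues

section Recursion

open TrivSqZeroExt BiJet

theorem poleJet_succ_mul (N m k l : ℕ) :
    poleJet (N + 1) m k l * ((coordS k + ((N : BiJet) + 1))^2 * (coordT l + ((N : BiJet) + 1))^2)
      = ((N : BiJet) + 1)^4 * poleJet N m k l := by
  have hs := congrArg ofS (poleFactor_succ_sq_mul N k)
  have ht := congrArg ofT (poleFactor_succ_sq_mul N l)
  simp only [map_mul, map_pow, map_add, map_natCast, map_one] at hs ht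
  simp only [poleJet, coordS, coordT]
  generalize shiftedProd m (ofS (coord k)) * shiftedProd m (ofT (coord l))
    * shiftedProd m (ofS (coord k) + ofT (coord l)) = numerator
  linear_combination numerator * (ofT (poleFactor (N + 1) l)^2
      * (ofT (coord l) + ((N : BiJet) + 1))^2 * hs
    + ((N : BiJet) + 1)^2 * ofS (poleFactor N k)^2 * ht)

theorem poleJet_succ_right (N m k l : ℕ) :
    poleJet N (m + 1) k l = poleJet N m k l * ((coordS k - ((m : BiJet) + 1))
      * (coordT l - ((m : BiJet) + 1)) * (coordS k + coordT l - ((m : BiJet) + 1))) := by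
  simp only [poleJet, shiftedProd_succ]
  ring

theorem poleJet_of_lt {N k l : ℕ} (m : ℕ) (h : N < k ∨ N < l) : poleJet N m k l = 0 := by
  rcases h with h | h <;> simp only [poleJet, poleFactor_of_lt h, map_zero] <;> ring

theorem poleJet_mul_recNumerator_eq_zsmul {m : ℕ} {n : ℤ} (hn : n = m + 2) (k l : ℕ) :
    poleJet (m + 3) m k l * recNumerator n (coordS k) (coordT l)
      = (2 * n^3 * (2 * (2 * n + 1) * (n + 1)^6 * recCoeff₀ n)) • poleJet (m + 3) (m + 3) k l
        + (2 * n^3 * (recCoeff₁ n * (n + 1)^4)) • poleJet (m + 2) (m + 2) k l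
        - (2 * n^3 * (2 * recCoeff₂ n * ((n + 1) * n)^4)) • poleJet (m + 1) (m + 1) k l
        - (2 * n^3 * ((n - 1)^4 * recCoeff₀ (n + 1) * ((n + 1) * n * (n - 1))^4))
          • poleJet m m k l := by
  have h1 := poleJet_succ_mul m m k l
  have h2 := poleJet_succ_mul (m + 1) m k l
  have h3 := poleJet_succ_mul (m + 2) m k l
  simp only [poleJet_succ_right, zsmul_eq_mul, recNumerator]
  have hm : (m : BiJet) + 1 = n - 1 := by rw [hn]; push_cast; ring
  have hm' : (m : BiJet) + 1 + 1 = n := by rw [hn]; push_cast; ring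
  have hm'' : (m : BiJet) + 2 + 1 = n + 1 := by rw [hn]; push_cast; ring
  push_cast [hm, hm', hm'', sub_add_cancel] at h1 h2 h3 ⊢
  generalize (n : BiJet) = n at *
  generalize (recCoeff₀ _ : BiJet) = a at *
  generalize (recCoeff₁ _ : BiJet) = b at *
  generalize (recCoeff₂ _ : BiJet) = c at *
  generalize (recCoeff₀ _ : BiJet) = d at *
  generalize coordS k = s at *
  generalize coordT l = t at *
  generalize (s + (n - 1))^2 * (t + (n - 1))^2 = v₁ at *
  generalize (s + n)^2 * (t + n)^2 = v₂ at *
  generalize (s + (n + 1))^2 * (t + (n + 1))^2 = v₃ at *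
  generalize (s - (n - 1)) * (t - (n - 1)) * (s + t - (n - 1)) = u₁ at *
  generalize (s - n) * (t - n) * (s + t - n) = u₂ at *
  generalize (s - (n + 1)) * (t - (n + 1)) * (s + t - (n + 1)) = u₃ at *
  linear_combination 2 * n^3 * ((b * u₁ * u₂ - 2 * c * u₁ * v₂ - (n - 1)^4 * d * v₁ * v₂) * h3
    - (n + 1)^4 * (2 * c * u₁ + (n - 1)^4 * d * v₁) * h2 - (n + 1)^4 * n^4 * (n - 1)^4 * d * h1)

namespace Weights

variable (μ : Weights)

/-- The sum over all poles of the functionals at the expansions of the summand, multiplied by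
`n!³`. -/
def poleSum (n : ℕ) : ℚ :=
  ∑ k ∈ Finset.range (n + 1), ∑ l ∈ Finset.range (n + 1), μ.pairing k l (poleJet n n k l)

theorem sum_pairing_poleJet_eq_poleSum {n N : ℕ} (h : n ≤ N) :
    ∑ k ∈ Finset.range (N + 1), ∑ l ∈ Finset.range (N + 1), μ.pairing k l (poleJet n n k l)
      = μ.poleSum n := by
  have hsub : Finset.range (n + 1) ⊆ Finset.range (N + 1) :=
    Finset.range_subset_range.mpr (Nat.succ_le_succ h)
  have hlt {j : ℕ} (hj : j ∉ Finset.range (n + 1)) : n < j := by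
    rwa [Finset.mem_range, Nat.lt_succ_iff, not_le] at hj
  rw [poleSum, ← Finset.sum_subset hsub]
  · refine Finset.sum_congr rfl fun k _ => (Finset.sum_subset hsub fun l _ hl => ?_).symm
    rw [poleJet_of_lt n (.inr (hlt hl)), map_zero]
  · refine fun k _ hk => Finset.sum_eq_zero fun l _ => ?_
    rw [poleJet_of_lt n (.inl (hlt hk)), map_zero]

theorem poleSum_recursion {m : ℕ} {n : ℤ} (hn : n = m + 2) :
    2 * (2 * n + 1) * (n + 1)^6 * a0 n * μ.poleSum (m + 3)
      + a1 n * (n + 1)^4 * μ.poleSum (m + 2) - 2 * a2 n * ((n + 1) * n)^4 * μ.poleSum (m + 1)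
      - (n - 1)^4 * a0 (n + 1) * ((n + 1) * n * (n - 1))^4 * μ.poleSum m = 0 := by
  have h := μ.sum_pairing_poleJet_mul_recNumerator m
  rw [← hn] at h
  simp only [poleJet_mul_recNumerator_eq_zsmul hn, map_add, map_sub, map_zsmul] at h
  simp only [zsmul_eq_mul, Finset.sum_add_distrib, Finset.sum_sub_distrib, ← Finset.mul_sum] at h
  rw [sum_pairing_poleJet_eq_poleSum μ le_rfl, sum_pairing_poleJet_eq_poleSum μ (by omega),
    sum_pairing_poleJet_eq_poleSum μ (by omega), sum_pairing_poleJet_eq_poleSum μ (by omega)] at h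
  push_cast [cast_recCoeff₀, cast_recCoeff₁, cast_recCoeff₂] at h
  have hne : 2 * (n : ℚ)^3 ≠ 0 := by rw [hn]; push_cast; positivity
  apply mul_left_cancel₀ hne
  linear_combination h

end Weights

/-- The factor `(2n choose n) / n!³` that normalizes the summand to `R_n(s, t)`. -/
def normFactor (n : ℕ) : ℚ := n.centralBinom / n.factorial^3

theorem normFactor_succ (n : ℕ) :
    ((n : ℚ) + 1)^4 * normFactor (n + 1) = 2 * (2 * n + 1) * normFactor n := by
  have h : ((n : ℚ) + 1) * (n + 1).centralBinom = 2 * (2 * n + 1) * n.centralBinom := by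
    exact_mod_cast Nat.succ_mul_centralBinom_succ n
  rw [normFactor, normFactor, Nat.factorial_succ]
  push_cast
  field_simp
  linear_combination h

namespace Weights

variable (μ : Weights)

/-- The solution of the recursion that is attached to a family of weights. -/
def solution (n : ℕ) : ℚ := normFactor n * μ.poleSum n

theorem rec1_solution : Rec1 μ.solution := by
  intro n hn
  obtain ⟨m, rfl⟩ := Nat.exists_eq_add_of_le' hn
  have h := μ.poleSum_recursion (m := m) (n := (m + 2 : ℕ)) (by push_cast; rfl)
  have h1 := normFactor_succ m
  have h2 := normFactor_succ (m + 1)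
  have h3 := normFactor_succ (m + 2)
  rw [Nat.add_sub_cancel, show m + 2 - 1 = m + 1 from rfl]
  simp only [solution]
  have hm : (m : ℚ) = (m + 2 : ℕ) - 2 := by push_cast; ring
  have hpos : ((m + 2 : ℕ) : ℚ) + 1 ≠ 0 := by positivity
  rw [Int.cast_natCast] at h
  rw [hm] at h1
  rw [Nat.cast_add_one, hm] at h2
  generalize ((m + 2 : ℕ) : ℚ) = n at *
  apply mul_left_cancel₀ (pow_ne_zero 4 hpos)
  linear_combination normFactor (m + 2) * h + (n + 1)^6 * a0 n * μ.poleSum (m + 3) * h3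
    + (n + 1)^4 * (2 * a2 n * μ.poleSum (m + 1) + (n - 1)^8 * a0 (n + 1) * μ.poleSum m) * h2
    + 2 * (2 * n - 1) * (n + 1)^4 * (n - 1)^4 * a0 (n + 1) * μ.poleSum m * h1

end Weights

theorem a0_natCast_ne_zero {n : ℕ} (hn : 2 ≤ n) : a0 n ≠ 0 := by
  obtain ⟨m, rfl⟩ := Nat.exists_eq_add_of_le' hn
  have h : a0 (m + 2 : ℕ) = 41218 * (m : ℚ)^3 + 198849 * m^2 + 320790 * m + 173057 := by
    simp only [a0]
    push_cast
    ring
  rw [h]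
  positivity

theorem eq_of_rec1 {y z : ℕ → ℚ} (hy : Rec1 y) (hz : Rec1 z) (h0 : y 0 = z 0) (h1 : y 1 = z 1)
    (h2 : y 2 = z 2) : y = z := by
  funext n
  induction n using Nat.strong_induction_on with
  | _ n ih =>
    match n, ih with
    | 0, _ => exact h0
    | 1, _ => exact h1
    | 2, _ => exact h2
    | m + 3, ih =>
      have hlead : (((m + 2 : ℕ) : ℚ) + 1)^6 * a0 (m + 2 : ℕ) ≠ 0 :=
        mul_ne_zero (by positivity) (a0_natCast_ne_zero (by omega))
      apply mul_left_cancel₀ hlead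
      have hy' := hy (m + 2) (by omega)
      have hz' := hz (m + 2) (by omega)
      rw [show m + 2 - 1 = m + 1 by omega, show m + 2 - 2 = m by omega] at hy' hz'
      rw [ih (m + 2) (by omega), ih (m + 1) (by omega), ih m (by omega)] at hy'
      linear_combination hy' - hz'

theorem rec1_const_mul {y : ℕ → ℚ} (hy : Rec1 y) (c : ℚ) : Rec1 fun n => c * y n :=
  fun n hn => by linear_combination c * hy n hn

end Recursion

section ThreeSolutions

open TrivSqZeroExt BiJet

section Potential

variable (f g : ℕ → ℕ → ℚ)

/-- The function on `ℕ × ℕ` that vanishes at `(0, 0)` and has differences `f k l` in the first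
variable `k` and `g l k` in the second variable `l`, when `f` and `g` are compatible. -/
def potential (k l : ℕ) : ℚ := ∑ j ∈ Finset.range l, g j 0 + ∑ i ∈ Finset.range k, f i l

theorem potential_succ_sub (k l : ℕ) : potential f g (k + 1) l - potential f g k l = f k l := by
  rw [potential, potential, Finset.sum_range_succ]
  ring

variable {f g}

theorem potential_succ_right_sub (h : ∀ k l, f k (l + 1) - f k l = g l (k + 1) - g l k) (k l : ℕ) :
    potential f g k (l + 1) - potential f g k l = g l k := by
  induction k with
  | zero => simp only [potential, Finset.sum_range_succ, Finset.sum_range_zero]; ring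
  | succ k ih =>
    linear_combination ih + potential_succ_sub f g k (l + 1) - potential_succ_sub f g k l + h k l

theorem potential_symm (h : ∀ k l, f k (l + 1) - f k l = g l (k + 1) - g l k) (k l : ℕ) :
    potential f g k l = potential g f l k := by
  induction l with
  | zero => simp only [potential, Finset.sum_range_zero, zero_add, add_zero]
  | succ l ih => linear_combination ih + potential_succ_right_sub h k l - potential_succ_sub g f l k

end Potential

section Compatibility

/-- The weight `β` of the residues for `ζ(5)`. -/
def zetaFiveβ (k : ℕ) : ℚ := 2 * genHarmonic 3 k

theorem zetaFiveβ_succ (k : ℕ) : zetaFiveβ (k + 1) = zetaFiveβ k + 2 / ((k : ℚ) + 1)^3 := by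
  rw [zetaFiveβ, zetaFiveβ, genHarmonic_succ]
  ring

theorem stepFF_compatible (k l : ℕ) :
    stepFF (genHarmonic 2) zetaFiveβ k (l + 1) - stepFF (genHarmonic 2) zetaFiveβ k l
      = stepFF (genHarmonic 2) zetaFiveβ l (k + 1) - stepFF (genHarmonic 2) zetaFiveβ l k := by
  have key {x y : ℚ} (hx : 0 < x) (hy : 0 < y) :
      2 / y^3 / x^2 - (2 / y^3 / (x + y)^2 + 2 * (1 / y^2) / (x + y)^3)
        = 2 / x^3 / y^2 - (2 / x^3 / (x + y)^2 + 2 * (1 / x^2) / (x + y)^3) := by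
    field_simp
    ring
  have h := key k.cast_add_one_pos l.cast_add_one_pos
  simp only [stepFF, genHarmonic_succ, zetaFiveβ_succ, Nat.cast_add_one]
  rw [show (l : ℚ) + k + 1 = k + l + 1 by ring,
    show (l : ℚ) + (k + 1) + 1 = k + 1 + (l + 1) by ring,
    show (k : ℚ) + (l + 1) + 1 = k + 1 + (l + 1) by ring]
  linear_combination h

theorem stepSF_compatible (k l : ℕ) :
    stepSF (genHarmonic 2) zetaFiveβ k (l + 1) - stepSF (genHarmonic 2) zetaFiveβ k l
      = stepFS (genHarmonic 2) zetaFiveβ l (k + 1) - stepFS (genHarmonic 2) zetaFiveβ l k := by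
  have key {x y : ℚ} (hx : 0 < x) (hy : 0 < y) :
      2 / y^3 / x - (2 / y^3 / (x + y) + 1 / y^2 / (x + y)^2)
        = 1 / x^2 / y^2 - 1 / x^2 / (x + y)^2 := by
    field_simp
    ring
  have h := key k.cast_add_one_pos l.cast_add_one_pos
  simp only [stepSF, stepFS, genHarmonic_succ, zetaFiveβ_succ, Nat.cast_add_one]
  rw [show (l : ℚ) + k + 1 = k + l + 1 by ring,
    show (l : ℚ) + (k + 1) + 1 = k + 1 + (l + 1) by ring,
    show (k : ℚ) + (l + 1) + 1 = k + 1 + (l + 1) by ring]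
  linear_combination h

theorem stepSS_compatible (k l : ℕ) :
    stepSS (genHarmonic 2) k (l + 1) - stepSS (genHarmonic 2) k l
      = stepSS (genHarmonic 2) l (k + 1) - stepSS (genHarmonic 2) l k := by
  have key {x y : ℚ} (hx : 0 < x) (hy : 0 < y) :
      1 / y^2 / x - 1 / y^2 / (x + y) = 1 / x^2 / y - 1 / x^2 / (x + y) := by
    field_simp
    ring
  have h := key k.cast_add_one_pos l.cast_add_one_pos
  simp only [stepSS, genHarmonic_succ, Nat.cast_add_one]
  rw [show (l : ℚ) + k + 1 = k + l + 1 by ring,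
    show (l : ℚ) + (k + 1) + 1 = k + 1 + (l + 1) by ring,
    show (k : ℚ) + (l + 1) + 1 = k + 1 + (l + 1) by ring]
  linear_combination h

end Compatibility

/-- The weights whose solution is `-q_n`. -/
def unitWeights : Weights where
  α _ := 0
  β _ := 0
  ff _ _ := 1
  sf _ _ := 0
  ss _ _ := 0
  ff_symm _ _ := rfl
  ss_symm _ _ := rfl
  ff_succ k l := by simp only [stepFF]; ring
  sf_succ k l := by simp only [stepSF]; ring
  sf_succ_right k l := by simp only [stepFS]; ring
  ss_succ k l := by simp only [stepSS]; ring

/-- The weights whose solution is `4 p̃_n`, the numerator of the approximations to `ζ(3)`. -/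
def zetaThreeWeights : Weights where
  α _ := 1
  β _ := 0
  ff k l := -4 * genHarmonic 3 (k + l)
  sf k l := genHarmonic 2 l - 2 * genHarmonic 2 (k + l)
  ss k l := genHarmonic 1 k + genHarmonic 1 l - 2 * genHarmonic 1 (k + l)
  ff_symm k l := by rw [add_comm]
  ss_symm k l := by rw [add_comm k l]; ring
  ff_succ k l := by rw [add_right_comm, genHarmonic_succ, stepFF]; push_cast; ring
  sf_succ k l := by rw [add_right_comm, genHarmonic_succ, stepSF]; push_cast; ring
  sf_succ_right k l := by
    rw [← add_assoc, add_comm l k, genHarmonic_succ, genHarmonic_succ, stepFS]; push_cast; ring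
  ss_succ k l := by
    rw [add_right_comm, genHarmonic_succ, genHarmonic_succ, stepSS]; push_cast; ring

/-- The weights whose solution is `-2 p_n`, the numerator of the approximations to `ζ(5)`. -/
def zetaFiveWeights : Weights where
  α := genHarmonic 2
  β := zetaFiveβ
  ff := potential (stepFF (genHarmonic 2) zetaFiveβ) (stepFF (genHarmonic 2) zetaFiveβ)
  sf := potential (stepSF (genHarmonic 2) zetaFiveβ) (stepFS (genHarmonic 2) zetaFiveβ)
  ss := potential (stepSS (genHarmonic 2)) (stepSS (genHarmonic 2))
  ff_symm := potential_symm stepFF_compatible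
  ss_symm := potential_symm stepSS_compatible
  ff_succ := potential_succ_sub _ _
  sf_succ := potential_succ_sub _ _
  sf_succ_right k l := potential_succ_right_sub stepSF_compatible l k
  ss_succ := potential_succ_sub _ _

theorem fst_two {R : Type*} [Ring R] : (2 : DualNumber R).fst = 2 := by
  rw [← one_add_one_eq_two, fst_add, fst_one, one_add_one_eq_two]

theorem snd_two {R : Type*} [Ring R] : (2 : DualNumber R).snd = 0 := by
  rw [← one_add_one_eq_two, snd_add, snd_one, add_zero]

namespace Weights

variable (μ : Weights)

theorem solution_zero : μ.solution 0 = μ.ff 0 0 := by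
  simp [solution, normFactor, poleSum, pairing_apply, poleJet, shiftedProd, sq]

theorem solution_one : μ.solution 1 = 2 * (-μ.ff 0 0 + 8 * μ.sf 0 0 - 15 * μ.ss 0 0
    + 2 * (-4 * μ.ff 0 1 + 14 * μ.sf 0 1 - 4 * μ.sf 1 0 + 15 * μ.ss 0 1)
    + (-12 * μ.ff 1 1 - 28 * μ.sf 1 1 - 15 * μ.ss 1 1)) := by
  norm_num [solution, normFactor, poleSum, Finset.sum_range_succ, Finset.prod_range_succ,
    pairing_apply, poleJet, shiftedProd, coordS, coordT, genHarmonic, sq, μ.ff_symm 1 0,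
    μ.ss_symm 1 0, Nat.centralBinom]
  ring

set_option maxRecDepth 4000 in
theorem solution_two : μ.solution 2 = 3 / 4 * (8 * μ.ff 0 0 - 96 * μ.sf 0 0 + 278 * μ.ss 0 0
    + 2 * (288 * μ.ff 0 1 - 1536 * μ.sf 0 1 - 480 * μ.sf 1 0 + 2456 * μ.ss 0 1)
    + 2 * (288 * μ.ff 0 2 - 1464 * μ.sf 0 2 + 528 * μ.sf 2 0 - 2734 * μ.ss 0 2)
    + (6912 * μ.ff 1 1 - 19584 * μ.sf 1 1 + 12672 * μ.ss 1 1)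
    + 2 * (5760 * μ.ff 1 2 - 7392 * μ.sf 1 2 + 11328 * μ.sf 2 1 - 15128 * μ.ss 1 2)
    + (4320 * μ.ff 2 2 + 17712 * μ.sf 2 2 + 17862 * μ.ss 2 2)) := by
  norm_num [solution, normFactor, poleSum, Finset.sum_range_succ, Finset.prod_range_succ,
    pairing_apply, poleJet, shiftedProd, coordS, coordT, genHarmonic, sq, μ.ff_symm 1 0,
    μ.ss_symm 1 0, μ.ff_symm 2 0, μ.ss_symm 2 0, μ.ff_symm 2 1, μ.ss_symm 2 1, Nat.centralBinom,
    Nat.choose, Nat.factorial, fst_two, snd_two]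
  ring

theorem eq_const_mul_solution {y : ℕ → ℚ} (hy : Rec1 y) {c : ℚ} (h0 : y 0 = c * μ.solution 0)
    (h1 : y 1 = c * μ.solution 1) (h2 : y 2 = c * μ.solution 2) (n : ℕ) :
    y n = c * μ.solution n :=
  congrFun (eq_of_rec1 hy (rec1_const_mul μ.rec1_solution c) h0 h1 h2) n

end Weights

theorem eq_neg_unitWeights_solution {q : ℕ → ℚ} (hq : Rec1 q) (h0 : q 0 = -1) (h1 : q 1 = 42)
    (h2 : q 2 = -17934) (n : ℕ) : q n = -1 * unitWeights.solution n := by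
  refine unitWeights.eq_const_mul_solution hq ?_ ?_ ?_ n
  · norm_num [h0, Weights.solution_zero, unitWeights]
  · norm_num [h1, Weights.solution_one, unitWeights]
  · norm_num [h2, Weights.solution_two, unitWeights]

theorem eq_zetaThreeWeights_solution {y : ℕ → ℚ} (hy : Rec1 y) (h0 : y 0 = 0)
    (h1 : y 1 = 101 / 2) (h2 : y 2 = -344923 / 16) (n : ℕ) :
    y n = 1 / 4 * zetaThreeWeights.solution n := by
  refine zetaThreeWeights.eq_const_mul_solution hy ?_ ?_ ?_ n
  · norm_num [h0, Weights.solution_zero, zetaThreeWeights, genHarmonic]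
  · norm_num [h1, Weights.solution_one, zetaThreeWeights, genHarmonic, Finset.sum_range_succ]
  · norm_num [h2, Weights.solution_two, zetaThreeWeights, genHarmonic, Finset.sum_range_succ]

theorem eq_zetaFiveWeights_solution {y : ℕ → ℚ} (hy : Rec1 y) (h0 : y 0 = 0)
    (h1 : y 1 = 87 / 2) (h2 : y 2 = -1190161 / 64) (n : ℕ) :
    y n = -1 / 2 * zetaFiveWeights.solution n := by
  refine zetaFiveWeights.eq_const_mul_solution hy ?_ ?_ ?_ n
  · norm_num [h0, Weights.solution_zero, zetaFiveWeights, potential]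
  · norm_num [h1, Weights.solution_one, zetaFiveWeights, potential, stepFF, stepSF, stepFS, stepSS,
      zetaFiveβ, genHarmonic, Finset.sum_range_succ]
  · norm_num [h2, Weights.solution_two, zetaFiveWeights, potential, stepFF, stepSF, stepFS, stepSS,
      zetaFiveβ, genHarmonic, Finset.sum_range_succ]

end ThreeSolutions

section GradedOrder

open TrivSqZeroExt BiJet

variable (R : Subring ℚ) (d : ℚ)

/-- The bijets whose coefficients of `1`, `s`, `t` and `st` have denominators dividing
`1`, `d`, `d` and `d²`, relative to the ring `R`. -/
def gradedOrder : Subring BiJet where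
  carrier := {x | x.fst.fst ∈ R ∧ d * x.snd.fst ∈ R ∧ d * x.fst.snd ∈ R ∧ d^2 * x.snd.snd ∈ R}
  mul_mem' := by
    rintro x y ⟨xff, xsf, xfs, xss⟩ ⟨yff, ysf, yfs, yss⟩
    refine ⟨?_, ?_, ?_, ?_⟩
    · rw [mul_fst_fst]
      exact mul_mem xff yff
    · rw [mul_snd_fst]
      convert add_mem (mul_mem xff ysf) (mul_mem xsf yff) using 1
      ring
    · rw [mul_fst_snd]
      convert add_mem (mul_mem xff yfs) (mul_mem xfs yff) using 1
      ring
    · rw [mul_snd_snd]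
      convert add_mem (add_mem (add_mem (mul_mem xff yss) (mul_mem xfs ysf)) (mul_mem xsf yfs))
        (mul_mem xss yff) using 1
      ring
  one_mem' := by simp [one_mem, zero_mem]
  add_mem' := by
    rintro x y ⟨xff, xsf, xfs, xss⟩ ⟨yff, ysf, yfs, yss⟩
    simp only [Set.mem_ofPred_eq, fst_add, snd_add, mul_add]
    exact ⟨add_mem xff yff, add_mem xsf ysf, add_mem xfs yfs, add_mem xss yss⟩
  zero_mem' := by simp [zero_mem]
  neg_mem' := by
    rintro x ⟨xff, xsf, xfs, xss⟩
    simp only [Set.mem_ofPred_eq, fst_neg, snd_neg, mul_neg]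
    exact ⟨neg_mem xff, neg_mem xsf, neg_mem xfs, neg_mem xss⟩

variable {R d}

theorem mem_gradedOrder {x : BiJet} : x ∈ gradedOrder R d ↔
    x.fst.fst ∈ R ∧ d * x.snd.fst ∈ R ∧ d * x.fst.snd ∈ R ∧ d^2 * x.snd.snd ∈ R := Iff.rfl

theorem smul_mem_gradedOrder {r : ℚ} (hr : r ∈ R) {x : BiJet} (hx : x ∈ gradedOrder R d) :
    r • x ∈ gradedOrder R d := by
  obtain ⟨hff, hsf, hfs, hss⟩ := hx
  simp only [mem_gradedOrder, fst_smul, snd_smul, smul_eq_mul, mul_left_comm _ r]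
  exact ⟨mul_mem hr hff, mul_mem hr hsf, mul_mem hr hfs, mul_mem hr hss⟩

theorem ofS_mem_gradedOrder {a : Jet} (hfst : a.fst ∈ R) (hsnd : d * a.snd ∈ R) :
    ofS a ∈ gradedOrder R d := by
  simp [mem_gradedOrder, hfst, hsnd, zero_mem]

theorem ofT_mem_gradedOrder {a : Jet} (hfst : a.fst ∈ R) (hsnd : d * a.snd ∈ R) :
    ofT a ∈ gradedOrder R d := by
  simp [mem_gradedOrder, hfst, hsnd, zero_mem]

theorem smul_ofS_eps_mem_gradedOrder {r : ℚ} (hr : d * r ∈ R) :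
    r • ofS DualNumber.eps ∈ gradedOrder R d := by
  simp [mem_gradedOrder, hr, zero_mem]

theorem smul_ofT_eps_mem_gradedOrder {r : ℚ} (hr : d * r ∈ R) :
    r • ofT DualNumber.eps ∈ gradedOrder R d := by
  simp [mem_gradedOrder, hr, zero_mem]

theorem Weights.mul_pairing_mem (μ : Weights) {k l : ℕ} {c : ℚ} {x : BiJet}
    (hx : x ∈ gradedOrder R d) (hff : c * (d ^ 2 * μ.ff k l) ∈ R) (hsf : c * (d * μ.sf k l) ∈ R)
    (hfs : c * (d * μ.sf l k) ∈ R) (hss : c * μ.ss k l ∈ R) :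
    c * (d^2 * μ.pairing k l x) ∈ R := by
  obtain ⟨xff, xsf, xfs, xss⟩ := hx
  rw [pairing_apply]
  convert add_mem (add_mem (add_mem (mul_mem hff xff) (mul_mem hsf xsf)) (mul_mem hfs xfs))
    (mul_mem hss xss) using 1
  ring

theorem mul_genHarmonic_mem {c : ℚ} {r k : ℕ}
    (h : ∀ N : ℕ, 1 ≤ N → N ≤ k → c / (N : ℚ)^r ∈ R) : c * genHarmonic r k ∈ R := by
  rw [genHarmonic, Finset.mul_sum]
  refine sum_mem fun i hi => ?_
  have := h (i + 1) i.succ_pos (Finset.mem_range.mp hi)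
  rwa [Nat.cast_add_one, div_eq_mul_one_div] at this

theorem poleFactor_mem {n k : ℕ} (hk : k ≤ n) (h : ∀ N : ℕ, 1 ≤ N → N ≤ n → d / N ∈ R) :
    (poleFactor n k).fst ∈ R ∧ d * (poleFactor n k).snd ∈ R := by
  have hfst : (n.choose k : ℚ) * (-1)^k ∈ R :=
    mul_mem (natCast_mem R _) (pow_mem (neg_mem (one_mem R)) k)
  have hharm {j : ℕ} (hj : j ≤ n) : d * genHarmonic 1 j ∈ R :=
    mul_genHarmonic_mem fun N h1 h2 => by simpa only [pow_one] using h N h1 (h2.trans hj)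
  rw [poleFactor_fst, poleFactor_snd, mul_left_comm, mul_sub]
  exact ⟨hfst, mul_mem hfst (sub_mem (hharm hk) (hharm (n.sub_le k)))⟩

end GradedOrder

section ShiftedProdIntegrality

variable {B : Type*} [CommRing B] {A : Subring B} {η : B}

theorem shiftedProd_mem (hη : η ∈ A) (m : ℕ) : shiftedProd m η ∈ A :=
  prod_mem fun j _ => sub_mem hη (add_mem (natCast_mem A j) (one_mem A))

variable [Algebra ℚ B]

theorem inv_factorial_smul_shiftedProd_succ (m : ℕ) :
    ((m + 1).factorial : ℚ)⁻¹ • shiftedProd (m + 1) η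
      = (m.factorial : ℚ)⁻¹ • shiftedProd m η * (((m + 1 : ℕ) : ℚ)⁻¹ • η - 1) := by
  have hone : (1 : B) = ((m + 1 : ℕ) : ℚ)⁻¹ • ((m : B) + 1) := by
    rw [Algebra.smul_def, ← Nat.cast_add_one, ← map_natCast (algebraMap ℚ B), ← map_mul,
      inv_mul_cancel₀ (Nat.cast_ne_zero.mpr m.succ_ne_zero), map_one]
  rw [hone, ← smul_sub, smul_mul_smul_comm, shiftedProd_succ, Nat.factorial_succ, Nat.cast_mul,
    mul_inv_rev]

/-- Pascal's rule for the binomial coefficients `(η - a - 1 choose m)`. -/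
theorem inv_factorial_smul_shiftedProd_sub_succ (a m : ℕ) :
    ((m + 1).factorial : ℚ)⁻¹ • shiftedProd (m + 1) (η - ((a + 1 : ℕ) : B))
      = ((m + 1).factorial : ℚ)⁻¹ • shiftedProd (m + 1) (η - a)
        - (m.factorial : ℚ)⁻¹ • shiftedProd m (η - ((a + 1 : ℕ) : B)) := by
  have hfact : (m.factorial : ℚ)⁻¹ = ((m + 1).factorial : ℚ)⁻¹ * ((m + 1 : ℕ) : ℚ) := by
    rw [Nat.factorial_succ, Nat.cast_mul, mul_inv_rev,
      inv_mul_cancel_right₀ (Nat.cast_ne_zero.mpr m.succ_ne_zero)]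
  have hshift : η - a = η - ((a + 1 : ℕ) : B) + 1 := by push_cast; ring
  rw [hfact, mul_smul, ← smul_sub, hshift, shiftedProd_succ_add_one, shiftedProd_succ,
    Nat.cast_smul_eq_nsmul, nsmul_eq_mul]
  push_cast
  ring_nf

theorem inv_factorial_smul_shiftedProd_mem {n : ℕ}
    (h : ∀ N : ℕ, 1 ≤ N → N ≤ n → (N : ℚ)⁻¹ • η ∈ A) (a : ℕ) {m : ℕ} (hm : m ≤ n) :
    (m.factorial : ℚ)⁻¹ • shiftedProd m (η - (a : B)) ∈ A := by
  have hzero (x : B) : (Nat.factorial 0 : ℚ)⁻¹ • shiftedProd 0 x ∈ A := by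
    simp [shiftedProd, one_mem]
  induction a generalizing m with
  | zero =>
    rw [Nat.cast_zero, sub_zero]
    induction m with
    | zero => exact hzero η
    | succ m ih =>
      rw [inv_factorial_smul_shiftedProd_succ]
      exact mul_mem (ih (Nat.le_of_succ_le hm)) (sub_mem (h _ m.succ_pos hm) (one_mem A))
  | succ a iha =>
    induction m with
    | zero => exact hzero _
    | succ m ih =>
      rw [inv_factorial_smul_shiftedProd_sub_succ]
      exact sub_mem (iha hm) (ih (Nat.le_of_succ_le hm))

theorem exists_shiftedProd_eq_smul {p a m : ℕ} (hη : (p : ℚ)⁻¹ • η ∈ A) (hap : a < p)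
    (hpm : p ≤ a + m) : ∃ y ∈ A, shiftedProd m (η - (a : B)) = (p : ℚ) • y := by
  have hp : (p : ℚ) ≠ 0 := Nat.cast_ne_zero.mpr (Nat.ne_zero_of_lt hap)
  have hηA : η ∈ A := by
    have := nsmul_mem hη p
    rwa [← Nat.cast_smul_eq_nsmul ℚ, smul_inv_smul₀ hp] at this
  obtain ⟨j, rfl⟩ : ∃ j, p = a + (j + 1) := ⟨p - a - 1, by omega⟩
  have hj : j ∈ Finset.range m := Finset.mem_range.mpr (by omega)
  refine ⟨(((a + (j + 1) : ℕ) : ℚ)⁻¹ • η - 1)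
    * ∏ i ∈ (Finset.range m).erase j, (η - a - ((i : B) + 1)),
    mul_mem (sub_mem hη (one_mem A)) (prod_mem fun i _ => sub_mem (sub_mem hηA (natCast_mem A a))
      (add_mem (natCast_mem A i) (one_mem A))), ?_⟩
  rw [shiftedProd, ← Finset.mul_prod_erase _ _ hj, ← smul_mul_assoc, smul_sub, smul_inv_smul₀ hp,
    Nat.cast_smul_eq_nsmul, nsmul_one, sub_sub]
  push_cast
  rfl

end ShiftedProdIntegrality

section PoleJetIntegrality

open TrivSqZeroExt BiJet

variable {R : Subring ℚ} {d : ℚ}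

theorem coordS_eq_sub (k : ℕ) : coordS k = ofS DualNumber.eps - (k : BiJet) := by
  rw [coordS, coord, map_add, map_neg, map_natCast, neg_add_eq_sub]

theorem coordT_eq_sub (k : ℕ) : coordT k = ofT DualNumber.eps - (k : BiJet) := by
  rw [coordT, coord, map_add, map_neg, map_natCast, neg_add_eq_sub]

theorem coordS_add_coordT (k l : ℕ) : coordS k + coordT l
    = ofS DualNumber.eps + ofT DualNumber.eps - ((k + l : ℕ) : BiJet) := by
  rw [coordS_eq_sub, coordT_eq_sub, Nat.cast_add]
  ring

/-- The expansion at the pole `(-k, -l)` of the summand without its factor `(2n choose n)`. -/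
def normalizedPoleJet (n k l : ℕ) : BiJet := (n.factorial : ℚ)⁻¹ ^ 3 • poleJet n n k l

theorem poleFactors_mem_gradedOrder {n k l : ℕ} (hk : k ≤ n) (hl : l ≤ n)
    (h : ∀ N : ℕ, 1 ≤ N → N ≤ n → d / N ∈ R) :
    ofS (poleFactor n k)^2 * ofT (poleFactor n l)^2 ∈ gradedOrder R d := by
  have hS := poleFactor_mem hk h
  have hT := poleFactor_mem hl h
  exact mul_mem (pow_mem (ofS_mem_gradedOrder hS.1 hS.2) 2)
    (pow_mem (ofT_mem_gradedOrder hT.1 hT.2) 2)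

theorem normalizedPoleJet_mem {n k l : ℕ} (hk : k ≤ n) (hl : l ≤ n)
    (h : ∀ N : ℕ, 1 ≤ N → N ≤ n → d / N ∈ R) : normalizedPoleJet n k l ∈ gradedOrder R d := by
  have hS (N : ℕ) (h1 : 1 ≤ N) (h2 : N ≤ n) : (N : ℚ)⁻¹ • ofS DualNumber.eps ∈ gradedOrder R d :=
    smul_ofS_eps_mem_gradedOrder (h N h1 h2)
  have hT (N : ℕ) (h1 : 1 ≤ N) (h2 : N ≤ n) : (N : ℚ)⁻¹ • ofT DualNumber.eps ∈ gradedOrder R d :=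
    smul_ofT_eps_mem_gradedOrder (h N h1 h2)
  have hST (N : ℕ) (h1 : 1 ≤ N) (h2 : N ≤ n) :
      (N : ℚ)⁻¹ • (ofS DualNumber.eps + ofT DualNumber.eps) ∈ gradedOrder R d := by
    rw [smul_add]
    exact add_mem (hS N h1 h2) (hT N h1 h2)
  have hprod := mul_mem (mul_mem (inv_factorial_smul_shiftedProd_mem (B := BiJet) hS k le_rfl)
    (inv_factorial_smul_shiftedProd_mem (B := BiJet) hT l le_rfl))
    (inv_factorial_smul_shiftedProd_mem (B := BiJet) hST (k + l) le_rfl)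
  rw [smul_mul_smul_comm, smul_mul_smul_comm, ← coordS_eq_sub, ← coordT_eq_sub,
    ← coordS_add_coordT, ← pow_three'] at hprod
  rw [normalizedPoleJet, poleJet, ← mul_smul_comm]
  exact mul_mem (poleFactors_mem_gradedOrder hk hl h) hprod

/-- Each of `∏ (s - j)` and `∏ (t - j)` has a factor vanishing modulo `p` at a pole `(-k, -l)` with
`p ≤ k + l`, which compensates the pole of order two of the weights. -/
theorem exists_normalizedPoleJet_eq_smul {n k l p : ℕ} (hk : k ≤ n) (hl : l ≤ n) (hnp : n < p)
    (hp : p ≤ k + l) (hfact : (n.factorial : ℚ)⁻¹ ∈ R)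
    (h : ∀ N : ℕ, 1 ≤ N → N ≤ p → (p : ℚ) / N ∈ R) :
    ∃ x ∈ gradedOrder R p, normalizedPoleJet n k l = (p : ℚ)^2 • x := by
  have hS : (p : ℚ)⁻¹ • ofS DualNumber.eps ∈ gradedOrder R p :=
    smul_ofS_eps_mem_gradedOrder (h p (by omega) le_rfl)
  have hT : (p : ℚ)⁻¹ • ofT DualNumber.eps ∈ gradedOrder R p :=
    smul_ofT_eps_mem_gradedOrder (h p (by omega) le_rfl)
  obtain ⟨y, hy, hSy⟩ := exists_shiftedProd_eq_smul (B := BiJet) hS (hk.trans_lt hnp)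
    (show p ≤ k + n by omega)
  obtain ⟨z, hz, hTz⟩ := exists_shiftedProd_eq_smul (B := BiJet) hT (hl.trans_lt hnp)
    (show p ≤ l + n by omega)
  have hpR : (p : ℚ) * 1 ∈ R := mul_mem (natCast_mem R p) (one_mem R)
  have hw : shiftedProd n (coordS k + coordT l) ∈ gradedOrder R p := by
    refine shiftedProd_mem (B := BiJet) ?_ n
    rw [coordS_add_coordT]
    have hS1 := smul_ofS_eps_mem_gradedOrder hpR
    have hT1 := smul_ofT_eps_mem_gradedOrder hpR
    rw [one_smul] at hS1 hT1
    exact sub_mem (add_mem hS1 hT1) (natCast_mem (gradedOrder R p) (k + l))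
  have hfac := poleFactors_mem_gradedOrder hk hl fun N h1 h2 => h N h1 (h2.trans hnp.le)
  refine ⟨(n.factorial : ℚ)⁻¹ ^ 3 • (_ * (y * z * _)), smul_mem_gradedOrder (pow_mem hfact 3)
    (mul_mem hfac (mul_mem (mul_mem hy hz) hw)), ?_⟩
  rw [normalizedPoleJet, poleJet, coordS_eq_sub k, coordT_eq_sub l, hSy, hTz, ← coordS_eq_sub,
    ← coordT_eq_sub, smul_comm ((p : ℚ)^2), smul_mul_smul_comm, smul_mul_assoc, mul_smul_comm,
    sq (p : ℚ)]

end PoleJetIntegrality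

section Scales

open TrivSqZeroExt BiJet

/-- The number `d` bounds, relative to the ring `R`, the denominators of the reciprocals of
`1, …, m` after multiplication by suitable powers of `D_n` and by `2n choose n`. For `m = k + l` it
is the precision at which the functionals at the pole `(-k, -l)` are controlled. -/
structure IsScale (R : Subring ℚ) (n m : ℕ) (d : ℚ) : Prop where
  mem : d ∈ R
  mul_div_mem : ∀ N : ℕ, 1 ≤ N → N ≤ m → Dlcm n * (d / N) ∈ R
  mul_sq_div_cube_mem : ∀ N : ℕ, 1 ≤ N → N ≤ m →
    Dlcm n ^ 3 * n.centralBinom * (d^2 / (N : ℚ)^3) ∈ R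
  mul_div_sq_mem : ∀ N : ℕ, 1 ≤ N → N ≤ m → Dlcm n ^ 3 * n.centralBinom * (d / (N : ℚ)^2) ∈ R
  mul_one_div_mem : ∀ N : ℕ, 1 ≤ N → N ≤ m → Dlcm n ^ 3 * n.centralBinom * (1 / (N : ℚ)) ∈ R

theorem dvd_Dlcm {N n : ℕ} (h1 : 1 ≤ N) (h2 : N ≤ n) : N ∣ Dlcm n :=
  Finset.dvd_lcm (f := id) (Finset.mem_Icc.mpr ⟨h1, h2⟩)

variable {R : Subring ℚ} {n k l : ℕ} {d : ℚ}

theorem Dlcm_div_mem {N : ℕ} (h1 : 1 ≤ N) (h2 : N ≤ n) : (Dlcm n : ℚ) / N ∈ R := by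
  rw [← Nat.cast_div (dvd_Dlcm h1 h2) (Nat.cast_ne_zero.mpr (Nat.ne_zero_of_lt h1))]
  exact natCast_mem R _

theorem Dlcm_pow_mul_genHarmonic_mem (r : ℕ) {j : ℕ} (hj : j ≤ n) :
    (Dlcm n : ℚ)^r * genHarmonic r j ∈ R :=
  mul_genHarmonic_mem fun N h1 h2 => by
    rw [← div_pow]
    exact pow_mem (Dlcm_div_mem h1 (h2.trans hj)) r

theorem Dlcm_cube_mul_zetaFiveβ_mem {j : ℕ} (hj : j ≤ n) : (Dlcm n : ℚ)^3 * zetaFiveβ j ∈ R := by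
  rw [zetaFiveβ, mul_left_comm]
  exact mul_mem (ofNat_mem R 2) (Dlcm_pow_mul_genHarmonic_mem 3 hj)

namespace IsScale

theorem mul_zetaThreeWeights_ff_mem (h : IsScale R n (k + l) d) :
    Dlcm n ^ 3 * n.centralBinom * (d^2 * zetaThreeWeights.ff k l) ∈ R := by
  have hsum : Dlcm n ^ 3 * n.centralBinom * d^2 * genHarmonic 3 (k + l) ∈ R :=
    mul_genHarmonic_mem fun N h1 h2 => by
      simpa only [mul_div_assoc] using h.mul_sq_div_cube_mem N h1 h2
  convert neg_mem (mul_mem (ofNat_mem R 4) hsum) using 1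
  simp only [zetaThreeWeights]
  ring

theorem mul_zetaThreeWeights_sf_mem (h : IsScale R n (k + l) d) (hl : l ≤ n) :
    Dlcm n ^ 3 * n.centralBinom * (d * zetaThreeWeights.sf k l) ∈ R := by
  have hsum : Dlcm n ^ 3 * n.centralBinom * d * genHarmonic 2 (k + l) ∈ R :=
    mul_genHarmonic_mem fun N h1 h2 => by
      simpa only [mul_div_assoc] using h.mul_div_sq_mem N h1 h2
  have hl' := mul_mem (mul_mem (mul_mem (natCast_mem R (Dlcm n)) (natCast_mem R n.centralBinom))
    h.mem) (Dlcm_pow_mul_genHarmonic_mem 2 hl)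
  convert sub_mem hl' (mul_mem (ofNat_mem R 2) hsum) using 1
  simp only [zetaThreeWeights]
  ring

theorem mul_zetaThreeWeights_ss_mem (h : IsScale R n (k + l) d) (hk : k ≤ n) (hl : l ≤ n) :
    Dlcm n ^ 3 * n.centralBinom * zetaThreeWeights.ss k l ∈ R := by
  have hsum : Dlcm n ^ 3 * n.centralBinom * genHarmonic 1 (k + l) ∈ R :=
    mul_genHarmonic_mem fun N h1 h2 => by
      simpa only [pow_one, mul_one_div] using h.mul_one_div_mem N h1 h2
  have hkl := mul_mem (mul_mem (pow_mem (natCast_mem R (Dlcm n)) 2) (natCast_mem R n.centralBinom))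
    (add_mem (Dlcm_pow_mul_genHarmonic_mem 1 hk) (Dlcm_pow_mul_genHarmonic_mem 1 hl))
  convert sub_mem hkl (mul_mem (ofNat_mem R 2) hsum) using 1
  simp only [zetaThreeWeights]
  ring

section Steps

variable {m : ℕ}

theorem mul_stepFF_mem (h : IsScale R n m d) (hk : k < n) (hl : l ≤ n) (hkl : k + l < m) :
    Dlcm n ^ 5 * n.centralBinom * d^2 * stepFF (genHarmonic 2) zetaFiveβ k l ∈ R := by
  have hC := natCast_mem R n.centralBinom
  have hk1 : (Dlcm n : ℚ) / (k + 1 : ℕ) ∈ R := Dlcm_div_mem k.succ_pos hk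
  have hA := h.mul_div_mem (k + l + 1) (Nat.succ_pos _) hkl
  have hB := h.mul_sq_div_cube_mem (k + l + 1) (Nat.succ_pos _) hkl
  have hαk := Dlcm_pow_mul_genHarmonic_mem (R := R) 2 hk.le
  have hαl := Dlcm_pow_mul_genHarmonic_mem (R := R) 2 hl
  have hβk := Dlcm_cube_mul_zetaFiveβ_mem (R := R) hk.le
  have hβl := Dlcm_cube_mul_zetaFiveβ_mem (R := R) hl
  convert sub_mem (mul_mem (mul_mem hC hβl) (mul_mem (pow_mem h.mem 2) (pow_mem hk1 2)))
    (add_mem (mul_mem (mul_mem hC (add_mem hβl hβk)) (pow_mem hA 2))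
      (mul_mem (mul_mem (ofNat_mem R 2) (add_mem hαl hαk)) hB)) using 1
  simp only [stepFF, div_pow, mul_pow]
  push_cast
  ring

theorem mul_stepSF_mem (h : IsScale R n m d) (hk : k < n) (hl : l ≤ n) (hkl : k + l < m) :
    Dlcm n ^ 5 * n.centralBinom * d * stepSF (genHarmonic 2) zetaFiveβ k l ∈ R := by
  have hD := natCast_mem R (Dlcm n)
  have hC := natCast_mem R n.centralBinom
  have hk1 : (Dlcm n : ℚ) / (k + 1 : ℕ) ∈ R := Dlcm_div_mem k.succ_pos hk
  have hA := h.mul_div_mem (k + l + 1) (Nat.succ_pos _) hkl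
  have hB := h.mul_div_sq_mem (k + l + 1) (Nat.succ_pos _) hkl
  have hαk := Dlcm_pow_mul_genHarmonic_mem (R := R) 2 hk.le
  have hαl := Dlcm_pow_mul_genHarmonic_mem (R := R) 2 hl
  have hβl := Dlcm_cube_mul_zetaFiveβ_mem (R := R) hl
  convert sub_mem (mul_mem (mul_mem (mul_mem hD hC) hβl) (mul_mem h.mem hk1))
    (add_mem (mul_mem (mul_mem (mul_mem hD hC) hβl) hA) (mul_mem (add_mem hαl hαk) hB)) using 1
  rw [stepSF]
  push_cast
  ring

theorem mul_stepFS_mem (h : IsScale R n m d) (hk : k < n) (hl : l ≤ n) (hkl : k + l < m) :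
    Dlcm n ^ 5 * n.centralBinom * d * stepFS (genHarmonic 2) zetaFiveβ k l ∈ R := by
  have hD := natCast_mem R (Dlcm n)
  have hC := natCast_mem R n.centralBinom
  have hk1 : (Dlcm n : ℚ) / (k + 1 : ℕ) ∈ R := Dlcm_div_mem k.succ_pos hk
  have hA := h.mul_div_mem (k + l + 1) (Nat.succ_pos _) hkl
  have hB := h.mul_div_sq_mem (k + l + 1) (Nat.succ_pos _) hkl
  have hαk := Dlcm_pow_mul_genHarmonic_mem (R := R) 2 hk.le
  have hαl := Dlcm_pow_mul_genHarmonic_mem (R := R) 2 hl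
  have hβk := Dlcm_cube_mul_zetaFiveβ_mem (R := R) hk.le
  convert sub_mem (mul_mem (mul_mem (mul_mem hD hC) hαl) (mul_mem h.mem (pow_mem hk1 2)))
    (add_mem (mul_mem (mul_mem (mul_mem hD hC) hβk) hA) (mul_mem (add_mem hαl hαk) hB)) using 1
  simp only [stepFS, div_pow]
  push_cast
  ring

theorem mul_stepSS_mem (h : IsScale R n m d) (hk : k < n) (hl : l ≤ n) (hkl : k + l < m) :
    Dlcm n ^ 5 * n.centralBinom * stepSS (genHarmonic 2) k l ∈ R := by
  have hD := natCast_mem R (Dlcm n)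
  have hC := natCast_mem R n.centralBinom
  have hk1 : (Dlcm n : ℚ) / (k + 1 : ℕ) ∈ R := Dlcm_div_mem k.succ_pos hk
  have hB := h.mul_one_div_mem (k + l + 1) (Nat.succ_pos _) hkl
  have hαk := Dlcm_pow_mul_genHarmonic_mem (R := R) 2 hk.le
  have hαl := Dlcm_pow_mul_genHarmonic_mem (R := R) 2 hl
  convert sub_mem (mul_mem (mul_mem (mul_mem (pow_mem hD 2) hC) hαl) hk1)
    (mul_mem (add_mem hαl hαk) hB) using 1
  rw [stepSS]
  push_cast
  ring

end Steps

end IsScale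

theorem mul_potential_mem {f g : ℕ → ℕ → ℚ} {c : ℚ} (hk : k ≤ n) (hl : l ≤ n)
    (hf : ∀ i j, i < n → j ≤ n → i + j < k + l → c * f i j ∈ R)
    (hg : ∀ i j, i < n → j ≤ n → i + j < k + l → c * g i j ∈ R) :
    c * potential f g k l ∈ R := by
  rw [potential, mul_add, Finset.mul_sum, Finset.mul_sum]
  refine add_mem (sum_mem fun j hj => ?_) (sum_mem fun i hi => ?_)
  · have hj := Finset.mem_range.mp hj
    exact hg j 0 (hj.trans_le hl) n.zero_le (by omega)
  · have hi := Finset.mem_range.mp hi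
    exact hf i l (hi.trans_le hk) hl (by omega)

end Scales

section PAdicEstimates

/-- The ring `ℤ_(p)` of rational numbers whose denominator is prime to `p`. -/
abbrev localIntegers (p : ℕ) [Fact p.Prime] : Subring ℚ := (Rat.padicValuation p).integer

theorem exists_intCast_eq_of_mem_localIntegers {x : ℚ}
    (h : ∀ (p : ℕ) [Fact p.Prime], x ∈ localIntegers p) : ∃ z : ℤ, x = z := by
  have hden : x.den = 1 := Nat.eq_one_iff_not_exists_prime_dvd.mpr fun p hp => by
    have : Fact p.Prime := ⟨hp⟩
    exact Rat.padicValuation_le_one_iff.mp (h p)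
  exact ⟨x.num, (Rat.den_eq_one_iff x).mp hden |>.symm⟩

variable {p : ℕ} [hp : Fact p.Prime] {n : ℕ}

theorem natCast_inv_mem_localIntegers {N : ℕ} (h : ¬ p ∣ N) : (N : ℚ)⁻¹ ∈ localIntegers p := by
  refine Rat.padicValuation_le_one_iff.mpr ?_
  have hN : 0 < N := Nat.pos_of_ne_zero (by rintro rfl; exact h (dvd_zero p))
  rwa [Rat.inv_natCast_den_of_pos hN]

theorem div_mem_localIntegers {X N : ℕ} (hN : N ≠ 0) (h : p ^ N.factorization p ∣ X) :
    (X : ℚ) / N ∈ localIntegers p := by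
  obtain ⟨c, rfl⟩ := h
  have hp0 : (p : ℚ) ≠ 0 := Nat.cast_ne_zero.mpr hp.out.ne_zero
  have hinv : ((ordCompl[p] N : ℕ) : ℚ)⁻¹ ∈ localIntegers p :=
    natCast_inv_mem_localIntegers (Nat.not_dvd_ordCompl hp.out hN)
  convert mul_mem (natCast_mem (localIntegers p) c) hinv using 1
  have hsplit : (N : ℚ) = (p : ℚ) ^ N.factorization p * (ordCompl[p] N : ℕ) := by
    exact_mod_cast (Nat.ordProj_mul_ordCompl_eq_self N p).symm
  rw [Nat.cast_mul, Nat.cast_pow, ← div_eq_mul_inv, hsplit,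
    mul_div_mul_left _ _ (pow_ne_zero _ hp0)]

theorem prime_div_mem_localIntegers {N : ℕ} (h1 : 1 ≤ N) (h2 : N < 2 * p) :
    (p : ℚ) / N ∈ localIntegers p := by
  have hN : N ≠ 0 := Nat.ne_zero_of_lt h1
  refine div_mem_localIntegers hN ?_
  have hle : N.factorization p ≤ 1 := by
    by_contra! hgt
    have := (Nat.pow_le_pow_right hp.out.pos hgt).trans (Nat.ordProj_le p hN)
    nlinarith [hp.out.two_le]
  exact (pow_dvd_pow p hle).trans (pow_one p).dvd

theorem prime_dvd_centralBinom {i : ℕ} (h1 : n < p ^ i) (h2 : p ^ i ≤ 2 * n) :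
    p ∣ n.centralBinom := by
  have hi : i ≠ 0 := by
    rintro rfl
    rw [pow_zero] at h1 h2
    omega
  have hlog : i < Nat.log p (n + n) + 1 :=
    Nat.lt_succ_of_le (Nat.le_log_of_pow_le hp.out.one_lt (by omega))
  have hmem : i ∈ {i ∈ Finset.Ico 1 (Nat.log p (n + n) + 1) | p^i ≤ n % p^i + n % p^i} := by
    rw [Finset.mem_filter, Finset.mem_Ico, Nat.mod_eq_of_lt h1]
    omega
  rw [Nat.centralBinom_eq_two_mul_choose, two_mul]
  refine Nat.dvd_of_factorization_pos (n := (n + n).choose n) ?_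
  rw [Nat.factorization_choose' hp.out (Nat.lt_succ_self _)]
  exact (Finset.card_pos.mpr ⟨i, hmem⟩).ne'

theorem pow_pred_dvd_Dlcm (hpn : p ≤ n) {v : ℕ} (h : p ^ v ≤ 2 * n) : p^(v - 1) ∣ Dlcm n := by
  have hp2 := hp.out.two_le
  refine dvd_Dlcm (Nat.pow_pos hp.out.pos) ?_
  rcases v.eq_zero_or_pos with rfl | hv
  · simpa using hp2.trans hpn |>.trans' one_le_two
  · have := Nat.mul_le_mul_right (p^(v - 1)) hp2
    rw [← pow_succ', Nat.sub_add_cancel hv] at this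
    omega

theorem Dlcm_sq_div_mem (hpn : p ≤ n) {N : ℕ} (h1 : 1 ≤ N) (h2 : N ≤ 2 * n) :
    (Dlcm n : ℚ)^2 / N ∈ localIntegers p := by
  have hN : N ≠ 0 := Nat.ne_zero_of_lt h1
  have hv := pow_pred_dvd_Dlcm hpn ((Nat.ordProj_le p hN).trans h2)
  have hdvd := mul_dvd_mul hv (dvd_Dlcm hp.out.one_le hpn)
  rw [← pow_succ, ← sq] at hdvd
  have := div_mem_localIntegers hN ((pow_dvd_pow p (by omega)).trans hdvd)
  rwa [Nat.cast_pow] at this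

theorem Dlcm_pow_five_mul_centralBinom_div_cube_mem (hpn : p ≤ n) {N : ℕ} (h1 : 1 ≤ N)
    (h2 : N ≤ 2 * n) : (Dlcm n : ℚ)^5 * n.centralBinom / (N : ℚ)^3 ∈ localIntegers p := by
  have hN : N ≠ 0 := Nat.ne_zero_of_lt h1
  have hv := (Nat.ordProj_le p hN).trans h2
  have hpow {i : ℕ} (hi : p^i ∣ Dlcm n) : p^(i * 5) ∣ Dlcm n ^ 5 := by
    rw [pow_mul]
    exact pow_dvd_pow_of_dvd hi 5
  have hD5 : p^(1 * 5) ∣ Dlcm n ^ 5 := hpow (by rw [pow_one]; exact dvd_Dlcm hp.out.one_le hpn)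
  have hdvd : p^(3 * N.factorization p) ∣ Dlcm n ^ 5 * n.centralBinom := by
    generalize N.factorization p = v at hv
    rcases (by omega : v ≤ 1 ∨ v = 2 ∨ 3 ≤ v) with h | rfl | h
    · exact ((pow_dvd_pow p (by omega)).trans hD5).mul_right _
    · rcases lt_or_ge n (p^2) with hlt | hge
      · exact mul_dvd_mul hD5 (prime_dvd_centralBinom hlt hv)
      · exact ((pow_dvd_pow p (by omega)).trans
          (hpow (dvd_Dlcm (Nat.pow_pos hp.out.pos) hge))).mul_right _
    · exact ((pow_dvd_pow p (by omega)).trans (hpow (pow_pred_dvd_Dlcm hpn hv))).mul_right _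
  have := div_mem_localIntegers (p := p) (pow_ne_zero 3 hN) (X := Dlcm n ^ 5 * n.centralBinom)
    (by simpa using hdvd)
  exact_mod_cast this

theorem isScale_Dlcm (hpn : p ≤ n) {m : ℕ} (hm : m ≤ 2 * n) :
    IsScale (localIntegers p) n m (Dlcm n) := by
  have hD := natCast_mem (localIntegers p) (Dlcm n)
  have hC := natCast_mem (localIntegers p) n.centralBinom
  refine ⟨hD, fun N h1 h2 => ?_, fun N h1 h2 => ?_, fun N h1 h2 => ?_, fun N h1 h2 => ?_⟩
  · convert Dlcm_sq_div_mem hpn h1 (h2.trans hm) using 1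
    ring
  · convert Dlcm_pow_five_mul_centralBinom_div_cube_mem hpn h1 (h2.trans hm) using 1
    ring
  · convert mul_mem hC (pow_mem (Dlcm_sq_div_mem hpn h1 (h2.trans hm)) 2) using 1
    ring
  · convert mul_mem (mul_mem hD hC) (Dlcm_sq_div_mem hpn h1 (h2.trans hm)) using 1
    ring

theorem isScale_of_div_mem {R : Subring ℚ} {m : ℕ} {d : ℚ} (hd0 : d ≠ 0) (hd : d ∈ R)
    (hC : n.centralBinom / d ∈ R) (h : ∀ N : ℕ, 1 ≤ N → N ≤ m → d / N ∈ R) :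
    IsScale R n m d := by
  have hD := natCast_mem R (Dlcm n)
  have hCD := mul_mem (pow_mem hD 3) hC
  refine ⟨hd, fun N h1 h2 => mul_mem hD (h N h1 h2), fun N h1 h2 => ?_, fun N h1 h2 => ?_,
    fun N h1 h2 => ?_⟩
  · convert mul_mem hCD (pow_mem (h N h1 h2) 3) using 1
    field_simp
  · convert mul_mem hCD (pow_mem (h N h1 h2) 2) using 1
    field_simp
  · convert mul_mem hCD (h N h1 h2) using 1
    field_simp

/-- For `p ≤ n` the scale is `D_n`; for larger `p` it is `p` or `1`, according to whether `p` occurs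
among the denominators `1, …, k + l` of the functionals. -/
theorem exists_isScale (p : ℕ) [hp : Fact p.Prime] {n k l : ℕ} (hk : k ≤ n) (hl : l ≤ n) :
    ∃ d : ℚ, IsScale (localIntegers p) n (k + l) d ∧ ∃ x ∈ gradedOrder (localIntegers p) d,
      (Dlcm n : ℚ)^2 • normalizedPoleJet n k l = d^2 • x := by
  rcases le_or_gt p n with hpn | hnp
  · exact ⟨Dlcm n, isScale_Dlcm hpn (by omega), _,
      normalizedPoleJet_mem hk hl fun N h1 h2 => Dlcm_div_mem h1 h2, rfl⟩
  suffices ∃ d : ℚ, IsScale (localIntegers p) n (k + l) d ∧ ∃ x ∈ gradedOrder (localIntegers p) d,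
      normalizedPoleJet n k l = d^2 • x by
    obtain ⟨d, hd, x, hx, hxd⟩ := this
    exact ⟨d, hd, (Dlcm n : ℚ)^2 • x,
      smul_mem_gradedOrder (pow_mem (natCast_mem _ _) 2) hx, by rw [hxd, smul_comm]⟩
  rcases lt_or_ge (k + l) p with hlt | hge
  · have hinv (N : ℕ) (h1 : 1 ≤ N) (h2 : N < p) : (1 : ℚ) / N ∈ localIntegers p := by
      rw [one_div]
      exact natCast_inv_mem_localIntegers (Nat.not_dvd_of_pos_of_lt h1 h2)
    refine ⟨1, isScale_of_div_mem one_ne_zero (one_mem _) ?_ fun N h1 h2 =>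
      hinv N h1 (h2.trans_lt hlt), _, normalizedPoleJet_mem hk hl fun N h1 h2 =>
      hinv N h1 (h2.trans_lt hnp), by rw [one_pow, one_smul]⟩
    rw [div_one]
    exact natCast_mem _ _
  · refine ⟨p, isScale_of_div_mem (Nat.cast_ne_zero.mpr hp.out.ne_zero) (natCast_mem _ p) ?_
      fun N h1 h2 => prime_div_mem_localIntegers h1 (by omega),
      exists_normalizedPoleJet_eq_smul hk hl hnp hge
      (natCast_inv_mem_localIntegers ?_) fun N h1 h2 =>
      prime_div_mem_localIntegers h1 (by omega)⟩
    · have hdvd : p ∣ n.centralBinom :=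
        prime_dvd_centralBinom (i := 1) (by rwa [pow_one]) (by rw [pow_one]; omega)
      rw [← Nat.cast_div hdvd (Nat.cast_ne_zero.mpr hp.out.ne_zero)]
      exact natCast_mem _ _
    · rw [hp.out.dvd_factorial]
      omega

end PAdicEstimates

section Integrality

variable {n : ℕ}

namespace Weights

variable (μ : Weights)

theorem solution_eq_sum_normalizedPoleJet (n : ℕ) : μ.solution n = n.centralBinom *
    ∑ k ∈ Finset.range (n + 1), ∑ l ∈ Finset.range (n + 1),
      μ.pairing k l (normalizedPoleJet n k l) := by
  simp only [solution, normFactor, poleSum, normalizedPoleJet, map_smul, smul_eq_mul,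
    ← Finset.mul_sum]
  ring

theorem exists_intCast_eq_mul_solution {c : ℚ} (h : ∀ (p : ℕ) [Fact p.Prime] (k l : ℕ), k ≤ n →
      l ≤ n → c * n.centralBinom * μ.pairing k l (normalizedPoleJet n k l) ∈ localIntegers p) :
    ∃ z : ℤ, c * μ.solution n = z := by
  refine exists_intCast_eq_of_mem_localIntegers fun p _ => ?_
  rw [solution_eq_sum_normalizedPoleJet, ← mul_assoc, Finset.mul_sum]
  refine sum_mem fun k hk => ?_
  rw [Finset.mul_sum]
  exact sum_mem fun l hl => h p k l (Finset.mem_range_succ_iff.mp hk)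
    (Finset.mem_range_succ_iff.mp hl)

theorem exists_intCast_eq_Dlcm_pow_mul_solution {a : ℕ}
    (hff : ∀ {R : Subring ℚ} {d : ℚ} {k l : ℕ}, k ≤ n → l ≤ n → IsScale R n (k + l) d →
      Dlcm n ^ a * n.centralBinom * (d ^ 2 * μ.ff k l) ∈ R)
    (hsf : ∀ {R : Subring ℚ} {d : ℚ} {k l : ℕ}, k ≤ n → l ≤ n → IsScale R n (k + l) d →
      Dlcm n ^ a * n.centralBinom * (d * μ.sf k l) ∈ R)
    (hss : ∀ {R : Subring ℚ} {d : ℚ} {k l : ℕ}, k ≤ n → l ≤ n → IsScale R n (k + l) d →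
      Dlcm n ^ a * n.centralBinom * μ.ss k l ∈ R) :
    ∃ z : ℤ, (Dlcm n : ℚ)^(a + 2) * μ.solution n = z := by
  refine μ.exists_intCast_eq_mul_solution fun p _ k l hk hl => ?_
  obtain ⟨d, hd, x, hx, hxd⟩ := exists_isScale p hk hl
  have hpair : (Dlcm n : ℚ)^2 * μ.pairing k l (normalizedPoleJet n k l)
      = d^2 * μ.pairing k l x := by
    rw [← smul_eq_mul, ← map_smul, hxd, map_smul, smul_eq_mul]
  convert μ.mul_pairing_mem hx (hff hk hl hd) (hsf hk hl hd)
    (hsf hl hk (add_comm k l ▸ hd)) (hss hk hl hd) using 1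
  rw [← hpair]
  ring

end Weights

theorem exists_intCast_eq_unitWeights_solution (n : ℕ) :
    ∃ z : ℤ, unitWeights.solution n = z := by
  have h := unitWeights.exists_intCast_eq_mul_solution (n := n) (c := 1) fun p _ k l hk hl => by
    have hx := normalizedPoleJet_mem (R := localIntegers p) hk hl fun N h1 h2 =>
      Dlcm_div_mem h1 h2
    have hpair : unitWeights.pairing k l (normalizedPoleJet n k l)
        = (normalizedPoleJet n k l).fst.fst := by
      simp [Weights.pairing_apply, unitWeights]
    rw [hpair, one_mul]
    exact mul_mem (natCast_mem _ _) hx.1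
  simpa only [one_mul] using h

theorem exists_intCast_eq_zetaThreeWeights_solution (n : ℕ) :
    ∃ z : ℤ, (Dlcm n : ℚ)^5 * zetaThreeWeights.solution n = z :=
  zetaThreeWeights.exists_intCast_eq_Dlcm_pow_mul_solution (a := 3)
    (fun _ _ h => h.mul_zetaThreeWeights_ff_mem) (fun _ hl h => h.mul_zetaThreeWeights_sf_mem hl)
    fun hk hl h => h.mul_zetaThreeWeights_ss_mem hk hl

theorem exists_intCast_eq_zetaFiveWeights_solution (n : ℕ) :
    ∃ z : ℤ, (Dlcm n : ℚ)^7 * zetaFiveWeights.solution n = z := by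
  refine zetaFiveWeights.exists_intCast_eq_Dlcm_pow_mul_solution (a := 5)
    (fun hk hl h => ?_) (fun hk hl h => ?_) fun hk hl h => ?_
  · rw [← mul_assoc]
    exact mul_potential_mem hk hl (fun _ _ => h.mul_stepFF_mem) fun _ _ => h.mul_stepFF_mem
  · rw [← mul_assoc]
    exact mul_potential_mem hk hl (fun _ _ => h.mul_stepSF_mem) fun _ _ => h.mul_stepFS_mem
  · exact mul_potential_mem hk hl (fun _ _ => h.mul_stepSS_mem) fun _ _ => h.mul_stepSS_mem

end Integrality

end ZetaFive

/-- For all `n ≥ 1` one has `4 D_n^2 q_n ∈ ℤ`, `4 D_n^7 p_n ∈ ℤ` and `4 D_n^5 p̃_n ∈ ℤ`,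
with `D_n = lcm(1, 2, …, n)`. -/
theorem stmt6
    (q p pt : ℕ → ℚ)
    (hq : Rec1 q) (hp : Rec1 p) (hpt : Rec1 pt)
    (hq0 : q 0 = -1) (hq1 : q 1 = 42) (hq2 : q 2 = -17934)
    (hp0 : p 0 = 0) (hp1 : p 1 = 87/2) (hp2 : p 2 = -1190161/64)
    (hpt0 : pt 0 = 0) (hpt1 : pt 1 = 101/2) (hpt2 : pt 2 = -344923/16) :
    ∀ n : ℕ, 1 ≤ n →
      (∃ z : ℤ, 4 * (Dlcm n : ℚ)^2 * q n = (z : ℚ)) ∧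
      (∃ z : ℤ, 4 * (Dlcm n : ℚ)^7 * p n = (z : ℚ)) ∧
      (∃ z : ℤ, 4 * (Dlcm n : ℚ)^5 * pt n = (z : ℚ)) := by
  intro n _
  obtain ⟨a, ha⟩ := ZetaFive.exists_intCast_eq_unitWeights_solution n
  obtain ⟨b, hb⟩ := ZetaFive.exists_intCast_eq_zetaFiveWeights_solution n
  obtain ⟨c, hc⟩ := ZetaFive.exists_intCast_eq_zetaThreeWeights_solution n
  refine ⟨⟨-4 * Dlcm n ^ 2 * a, ?_⟩, ⟨-2 * b, ?_⟩, ⟨c, ?_⟩⟩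
  · rw [ZetaFive.eq_neg_unitWeights_solution hq hq0 hq1 hq2, ha]
    push_cast
    ring
  · rw [ZetaFive.eq_zetaFiveWeights_solution hp hp0 hp1 hp2]
    push_cast
    linear_combination -2 * hb
  · rw [ZetaFive.eq_zetaThreeWeights_solution hpt hpt0 hpt1 hpt2]
    linear_combination hc
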